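/- arXiv:2305.03357 — 6 statements merged into one kernel-verified Lean document; each statement's English description precedes it below -/
import Mathlib

section
/- Let X be a pospace. The relation on traces of X defined by ⟨f⟩ ≤ ⟨g⟩ iff there exist dipaths u, v in X with ⟨g⟩ = ⟨u⟩ ⋆ ⟨f⟩ ⋆ ⟨v⟩ is a partial order: it is reflexive, transitive, and antisymmetric. -/
open unitInterval

noncomputable section

/-- A reparametrization of the unit interval: continuous, monotone, fixing the endpoints. -/
def IsReparam (φ : unitInterval → unitInterval) : Prop :=
  Continuous φ ∧ Monotone φ ∧ φ 0 = 0 ∧ φ 1 = 1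

/-- Reparametrization equivalence of paths. -/
def ReparamEquiv {X : Type*} (f g : unitInterval → X) : Prop :=
  ∃ φ ψ : unitInterval → unitInterval, IsReparam φ ∧ IsReparam ψ ∧ f ∘ φ = g ∘ ψ

/-- A dipath in a pospace: a continuous monotone map `[0,1] → X`. -/
def IsDipath {X : Type*} [TopologicalSpace X] [Preorder X] (p : unitInterval → X) : Prop :=
  Continuous p ∧ Monotone p

/-- Concatenation of paths: `f` (rescaled) on `[0,1/2]`, `g` (rescaled) on `[1/2,1]`. -/
def concatFun {X : Type*} (f g : unitInterval → X) : unitInterval → X :=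
  fun t => if (t : ℝ) ≤ 1 / 2 then f (Set.projIcc 0 1 zero_le_one (2 * (t : ℝ)))
    else g (Set.projIcc 0 1 zero_le_one (2 * (t : ℝ) - 1))

/-- Traces: paths up to reparametrization equivalence. -/
def Trace (X : Type*) : Type _ := Quot (ReparamEquiv (X := X))

/-- The trace of a path. -/
def trc {X : Type*} (f : unitInterval → X) : Trace X := Quot.mk _ f

/-- The relation on traces of a pospace:
`⟨f⟩ ≤ ⟨g⟩` iff there are dipaths `u, v` with `⟨g⟩ = ⟨u⟩ ⋆ ⟨f⟩ ⋆ ⟨v⟩`. -/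
def TraceLE {X : Type*} [TopologicalSpace X] [PartialOrder X] (a b : Trace X) : Prop :=
  ∃ f u v : unitInterval → X,
    IsDipath f ∧ IsDipath u ∧ IsDipath v ∧
    u 1 = f 0 ∧ f 1 = v 0 ∧
    a = trc f ∧ b = trc (concatFun (concatFun u f) v)

/-!
A directed trace is determined by its image, and the extension order is inclusion of images.

If `f` and `g` are dipaths with the same image, then their endpoints agree and all their values are
comparable. For each `r`, follow the antidiagonal `s + t = r` from `t = 1` towards `s = 1`: there
`f s` increases and `g t` decreases, so they cross. Taking the last parameter `s` with `f s ≤ g t`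
makes both `s` and `t = r - s` monotone, hence 1-Lipschitz, functions of `r`, and these are
reparametrizations of `f` and `g` into one and the same path.

If instead the image of `f` is contained in that of `g`, then by connectedness it is the whole
stretch of `g` between `f 0` and `f 1`, so `g` has the same image as the part of `g` up to `f 0`,
followed by `f`, followed by the part of `g` from `f 1` on.
-/

open Set

section Reparametrization

theorem continuous_of_monotone_of_monotone_sub {p : ℝ → ℝ} (hp : Monotone p)
    (hsub : Monotone fun r => r - p r) : Continuous p := by
  refine (LipschitzWith.of_le_add fun x y => ?_).continuous
  rcases le_total x y with hxy | hyx
  · exact (hp hxy).trans (le_add_of_nonneg_right dist_nonneg)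
  · rw [Real.dist_eq, abs_of_nonneg (sub_nonneg.2 hyx)]
    have hle : y - p y ≤ x - p x := hsub hyx
    linarith

theorem isReparam_projIcc_comp {p : I → ℝ} (hcont : Continuous p) (hmono : Monotone p)
    (h0 : p 0 ≤ 0) (h1 : 1 ≤ p 1) : IsReparam fun x => projIcc 0 1 zero_le_one (p x) :=
  ⟨continuous_projIcc.comp hcont, (monotone_projIcc _).comp hmono,
    projIcc_eq_zero.2 h0, projIcc_eq_one.2 h1⟩

theorem IsReparam.surjective {φ : I → I} (hφ : IsReparam φ) : Function.Surjective φ := by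
  obtain ⟨hcont, -, h0, h1⟩ := hφ
  intro y
  have hy : y ∈ Icc (φ 0) (φ 1) := by
    rw [h0, h1]
    exact ⟨nonneg', le_one'⟩
  exact intermediate_value_univ 0 1 hcont hy

theorem ReparamEquiv.range_eq {X : Type*} {f g : I → X} (h : ReparamEquiv f g) :
    range f = range g := by
  obtain ⟨φ, ψ, hφ, hψ, hfg⟩ := h
  rw [← hφ.surjective.range_comp f, hfg, hψ.surjective.range_comp g]

end Reparametrization

section Crossing

variable {X : Type*}

/-- The parameters `s ≤ min 1 r` at which the path `f` is still below the path `g`, the latter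
taken at the parameter `r - s`. Paths are extended by constants outside the unit interval. -/
def belowSet [LE X] (f g : I → X) (r : ℝ) : Set ℝ :=
  {s | s ≤ 1 ∧ s ≤ r ∧ IccExtend zero_le_one f s ≤ IccExtend zero_le_one g (r - s)}

/-- The parameter at which the path `f` crosses the path `g` along the antidiagonal `s + t = r`:
the last `s` for which `f s` is below `g (r - s)`. -/
def crossing [LE X] (f g : I → X) (r : ℝ) : ℝ :=
  sSup (belowSet f g r)

theorem bddAbove_belowSet [LE X] (f g : I → X) (r : ℝ) : BddAbove (belowSet f g r) :=
  ⟨1, fun _ hs => hs.1⟩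

section Preorder

variable [Preorder X] {f g : I → X} {r r' s : ℝ}

theorem mem_belowSet_of_le_sub_one (hf : Monotone f) (h1 : f 1 ≤ g 1) (hs : s ≤ 1)
    (hsr : s ≤ r - 1) : s ∈ belowSet f g r := by
  refine ⟨hs, by linarith, ?_⟩
  rw [IccExtend_of_right_le zero_le_one g (by linarith)]
  exact (hf le_one').trans h1

theorem belowSet_nonempty (hf : Monotone f) (h1 : f 1 ≤ g 1) (r : ℝ) : (belowSet f g r).Nonempty :=
  ⟨min 1 (r - 1), mem_belowSet_of_le_sub_one hf h1 (min_le_left _ _) (min_le_right _ _)⟩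

theorem belowSet_subset_belowSet (hg : Monotone g) (hr : r ≤ r') :
    belowSet f g r ⊆ belowSet f g r' := fun _ ⟨hs1, hsr, hle⟩ =>
  ⟨hs1, hsr.trans hr, hle.trans (hg.IccExtend _ (sub_le_sub_right hr _))⟩

theorem sub_mem_belowSet (hf : Monotone f) (hr : r ≤ r') (hs : s ∈ belowSet f g r') :
    s - (r' - r) ∈ belowSet f g r := by
  obtain ⟨hs1, hsr, hle⟩ := hs
  refine ⟨by linarith, by linarith, ?_⟩
  rw [show r - (s - (r' - r)) = r' - s by ring]
  exact (hf.IccExtend _ (by linarith)).trans hle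

theorem monotone_crossing (hf : Monotone f) (hg : Monotone g) (h1 : f 1 ≤ g 1) :
    Monotone (crossing f g) := fun _ _ hr =>
  csSup_le_csSup (bddAbove_belowSet _ _ _) (belowSet_nonempty hf h1 _)
    (belowSet_subset_belowSet hg hr)

theorem monotone_sub_crossing (hf : Monotone f) (h1 : f 1 ≤ g 1) :
    Monotone fun r => r - crossing f g r := by
  intro r r' hr
  have hle : crossing f g r' ≤ crossing f g r + (r' - r) :=
    csSup_le (belowSet_nonempty hf h1 _) fun s hs => sub_le_iff_le_add.1 <|
      le_csSup (bddAbove_belowSet _ _ _) (sub_mem_belowSet hf hr hs)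
  dsimp only
  linarith

theorem continuous_crossing (hf : Monotone f) (hg : Monotone g) (h1 : f 1 ≤ g 1) :
    Continuous (crossing f g) :=
  continuous_of_monotone_of_monotone_sub (monotone_crossing hf hg h1) (monotone_sub_crossing hf h1)

theorem crossing_zero (h0 : f 0 ≤ g 0) : crossing f g 0 = 0 := by
  refine IsGreatest.csSup_eq ⟨⟨zero_le_one, le_rfl, ?_⟩, fun _ hs => hs.2.1⟩
  rw [sub_zero, IccExtend_left, IccExtend_left]
  exact h0

theorem crossing_two (hf : Monotone f) (h1 : f 1 ≤ g 1) : crossing f g 2 = 1 :=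
  IsGreatest.csSup_eq
    ⟨mem_belowSet_of_le_sub_one hf h1 le_rfl (by norm_num), fun _ hs => hs.1⟩

variable [TopologicalSpace X] [OrderClosedTopology X]

theorem isClosed_belowSet (hf : Continuous f) (hg : Continuous g) (r : ℝ) :
    IsClosed (belowSet f g r) :=
  isClosed_Iic.inter <| isClosed_Iic.inter <|
    isClosed_le hf.Icc_extend' (hg.Icc_extend'.comp (continuous_const.sub continuous_id))

theorem crossing_mem_belowSet (hf : Continuous f) (hg : Continuous g) (hfm : Monotone f)
    (h1 : f 1 ≤ g 1) (r : ℝ) : crossing f g r ∈ belowSet f g r :=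
  (isClosed_belowSet hf hg r).csSup_mem (belowSet_nonempty hfm h1 r) (bddAbove_belowSet f g r)

theorem IccExtend_sub_crossing_le (hf : IsDipath f) (hg : IsDipath g) (h0 : g 0 ≤ f 0)
    (h1 : f 1 = g 1) (hcomp : ∀ s t, f s ≤ g t ∨ g t ≤ f s) (r : ℝ) :
    IccExtend zero_le_one g (r - crossing f g r) ≤ IccExtend zero_le_one f (crossing f g r) := by
  set c := crossing f g r
  obtain ⟨hc1, hcr, -⟩ : c ∈ belowSet f g r := crossing_mem_belowSet hf.1 hg.1 hf.2 h1.le r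
  rcases hc1.eq_or_lt with hc1 | hc1
  · rw [IccExtend_of_right_le zero_le_one f hc1.ge]
    exact (hg.2 le_one').trans h1.ge
  rcases hcr.eq_or_lt with hcr | hcr
  · rw [IccExtend_of_le_left zero_le_one g (by linarith)]
    exact h0.trans (hf.2 nonneg')
  have hcm : c < min 1 r := lt_min hc1 hcr
  have hclosed : IsClosed {s | IccExtend zero_le_one g (r - s) ≤ IccExtend zero_le_one f s} :=
    isClosed_le (hg.1.Icc_extend'.comp (continuous_const.sub continuous_id)) hf.1.Icc_extend'
  have hright : Ioo c (min 1 r) ⊆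
      {s | IccExtend zero_le_one g (r - s) ≤ IccExtend zero_le_one f s} := fun s hs =>
    (hcomp _ _).resolve_left fun hle => hs.1.not_ge <| le_csSup (bddAbove_belowSet f g r)
      ⟨hs.2.le.trans (min_le_left _ _), hs.2.le.trans (min_le_right _ _), hle⟩
  have hIcc := closure_minimal hright hclosed
  rw [closure_Ioo hcm.ne] at hIcc
  exact hIcc (left_mem_Icc.2 hcm.le)

end Preorder

theorem IsDipath.reparamEquiv_of_forall_le_or_le [PartialOrder X] [TopologicalSpace X]
    [OrderClosedTopology X] {f g : I → X} (hf : IsDipath f) (hg : IsDipath g) (h0 : f 0 = g 0)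
    (h1 : f 1 = g 1) (hcomp : ∀ s t, f s ≤ g t ∨ g t ≤ f s) : ReparamEquiv f g := by
  have hdouble : Continuous fun x : I => 2 * (x : ℝ) := by fun_prop
  have hdouble_mono : Monotone fun x : I => 2 * (x : ℝ) := fun _ _ hxy =>
    mul_le_mul_of_nonneg_left hxy zero_le_two
  have hcont := continuous_crossing hf.2 hg.2 h1.le
  have hzero : crossing f g 0 = 0 := crossing_zero h0.le
  have htwo : crossing f g 2 = 1 := crossing_two hf.2 h1.le
  refine ⟨_, _,
    isReparam_projIcc_comp (hcont.comp hdouble)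
      ((monotone_crossing hf.2 hg.2 h1.le).comp hdouble_mono) (by simp [hzero]) (by simp [htwo]),
    isReparam_projIcc_comp ((continuous_id.sub hcont).comp hdouble)
      ((monotone_sub_crossing hf.2 h1.le).comp hdouble_mono)
      (by simp [hzero]) (by norm_num [htwo]),
    funext fun x => ?_⟩
  exact le_antisymm (crossing_mem_belowSet hf.1 hg.1 hf.2 h1.le _).2.2
    (IccExtend_sub_crossing_le hf hg h0.ge h1 hcomp _)

end Crossing

section Concatenation

variable {X : Type*} {f g : I → X}

theorem concatFun_one (f g : I → X) : concatFun f g 1 = g 1 := by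
  norm_num [concatFun]

theorem monotone_concatFun [Preorder X] (hf : Monotone f) (hg : Monotone g) (h : f 1 ≤ g 0) :
    Monotone (concatFun f g) := by
  intro s t hst
  have hst' : (s : ℝ) ≤ t := hst
  unfold concatFun
  split_ifs
  · exact hf (monotone_projIcc _ (by linarith))
  · exact (hf le_one').trans (h.trans (hg nonneg'))
  · linarith
  · exact hg (monotone_projIcc _ (by linarith))

variable [TopologicalSpace X]

theorem concatFun_coe {x y z : X} (γ : Path x y) (γ' : Path y z) :
    concatFun γ γ' = γ.trans γ' :=
  rfl

theorem continuous_concatFun (hf : Continuous f) (hg : Continuous g) (h : f 1 = g 0) :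
    Continuous (concatFun f g) := by
  let γ : Path (f 0) (g 0) := ⟨⟨f, hf⟩, rfl, h⟩
  let γ' : Path (g 0) (g 1) := ⟨⟨g, hg⟩, rfl, rfl⟩
  exact concatFun_coe γ γ' ▸ (γ.trans γ').continuous

theorem range_concatFun (hf : Continuous f) (hg : Continuous g) (h : f 1 = g 0) :
    range (concatFun f g) = range f ∪ range g := by
  let γ : Path (f 0) (g 0) := ⟨⟨f, hf⟩, rfl, h⟩
  let γ' : Path (g 0) (g 1) := ⟨⟨g, hg⟩, rfl, rfl⟩
  exact concatFun_coe γ γ' ▸ γ.trans_range γ'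

theorem IsDipath.concat [Preorder X] (hf : IsDipath f) (hg : IsDipath g) (h : f 1 = g 0) :
    IsDipath (concatFun f g) :=
  ⟨continuous_concatFun hf.1 hg.1 h, monotone_concatFun hf.2 hg.2 h.le⟩

section Triple

variable {u v : I → X}

theorem range_concatFun_concatFun (hu : Continuous u) (hf : Continuous f) (hv : Continuous v)
    (huf : u 1 = f 0) (hfv : f 1 = v 0) :
    range (concatFun (concatFun u f) v) = range u ∪ range f ∪ range v := by
  rw [range_concatFun (continuous_concatFun hu hf huf) hv ((concatFun_one u f).trans hfv),
    range_concatFun hu hf huf]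

theorem IsDipath.concat_concat [Preorder X] (hu : IsDipath u) (hf : IsDipath f) (hv : IsDipath v)
    (huf : u 1 = f 0) (hfv : f 1 = v 0) : IsDipath (concatFun (concatFun u f) v) :=
  (hu.concat hf huf).concat hv ((concatFun_one u f).trans hfv)

end Triple

end Concatenation

section Range

section Order

variable {α X : Type*} {f g : α → X}

theorem map_bot_eq_of_range_eq [Preorder α] [OrderBot α] [PartialOrder X] (hf : Monotone f)
    (hg : Monotone g) (h : range f = range g) : f ⊥ = g ⊥ := by
  have hleast_f := hf.map_isLeast isLeast_univ
  have hleast_g := hg.map_isLeast isLeast_univ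
  rw [image_univ] at hleast_f hleast_g
  exact hleast_f.unique (h ▸ hleast_g)

theorem map_top_eq_of_range_eq [Preorder α] [OrderTop α] [PartialOrder X] (hf : Monotone f)
    (hg : Monotone g) (h : range f = range g) : f ⊤ = g ⊤ :=
  map_bot_eq_of_range_eq (α := αᵒᵈ) (X := Xᵒᵈ) hf.dual hg.dual h

theorem le_or_le_of_range_subset {ι : Type*} [LinearOrder α] [Preorder X] {f : ι → X}
    (hg : Monotone g) (h : range f ⊆ range g) (s : ι) (t : α) : f s ≤ g t ∨ g t ≤ f s := by
  obtain ⟨q, hq⟩ := h (mem_range_self s)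
  exact hq ▸ (le_total q t).imp (@hg q t) (@hg t q)

end Order

variable {X : Type*} [TopologicalSpace X] [PartialOrder X] [OrderClosedTopology X] {f g : I → X}

theorem IsDipath.reparamEquiv_of_range_eq (hf : IsDipath f) (hg : IsDipath g)
    (h : range f = range g) : ReparamEquiv f g :=
  hf.reparamEquiv_of_forall_le_or_le hg (map_bot_eq_of_range_eq hf.2 hg.2 h)
    (map_top_eq_of_range_eq hf.2 hg.2 h) (le_or_le_of_range_subset hg.2 h.subset)

theorem mem_range_of_forall_le_or_le {α : Type*} [TopologicalSpace α] [PreconnectedSpace α]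
    {f : α → X} (hf : Continuous f) {x : X} (hcomp : ∀ s, f s ≤ x ∨ x ≤ f s) {a b : α}
    (hx : x ∈ Icc (f a) (f b)) : x ∈ range f := by
  obtain ⟨s, -, hle, hge⟩ := isPreconnected_closed_iff.1 isPreconnected_univ _ _
    (isClosed_le hf continuous_const) (isClosed_le continuous_const hf)
    (fun s _ => hcomp s) ⟨a, mem_univ _, hx.1⟩ ⟨b, mem_univ _, hx.2⟩
  exact ⟨s, le_antisymm hle hge⟩

theorem IsDipath.exists_range_eq_union (hf : IsDipath f) (hg : IsDipath g)
    (h : range f ⊆ range g) : ∃ u v : I → X, IsDipath u ∧ IsDipath v ∧ u 1 = f 0 ∧ f 1 = v 0 ∧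
      range g = range u ∪ range f ∪ range v := by
  obtain ⟨a, ha⟩ := h (mem_range_self 0)
  obtain ⟨b, hb⟩ := h (mem_range_self 1)
  refine ⟨fun t => g (min t a), fun t => g (max t b),
    ⟨hg.1.comp (by fun_prop), fun s t hst => hg.2 (min_le_min_right a hst)⟩,
    ⟨hg.1.comp (by fun_prop), fun s t hst => hg.2 (max_le_max_right b hst)⟩,
    (congrArg g (min_eq_right le_one')).trans ha,
    hb.symm.trans (congrArg g (max_eq_right nonneg')).symm, Subset.antisymm ?_ ?_⟩
  · rintro _ ⟨t, rfl⟩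
    rcases le_total t a with hta | hat
    · exact .inl (.inl ⟨t, congrArg g (min_eq_left hta)⟩)
    rcases le_total b t with hbt | htb
    · exact .inr ⟨t, congrArg g (max_eq_left hbt)⟩
    · exact .inl (.inr (mem_range_of_forall_le_or_le hf.1
        (fun s => le_or_le_of_range_subset hg.2 h s t) ⟨ha ▸ hg.2 hat, hb ▸ hg.2 htb⟩))
  · exact union_subset (union_subset (range_comp_subset_range _ g) h) (range_comp_subset_range _ g)

end Range

namespace Trace

variable {X : Type*}

/-- The set of points visited by a trace. -/
def image : Trace X → Set X :=
  Quot.lift range fun _ _ h => h.range_eq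

theorem image_trc (f : I → X) : (trc f).image = range f :=
  rfl

variable [TopologicalSpace X]

/-- A trace of a dipath. Elements of `Trace X` are classes of arbitrary functions, so the traces
of a pospace in the usual sense are those satisfying this predicate. -/
def IsDirected [Preorder X] (a : Trace X) : Prop :=
  ∃ f : I → X, IsDipath f ∧ a = trc f

variable [PartialOrder X] [OrderClosedTopology X]

theorem image_injOn : InjOn image {a : Trace X | a.IsDirected} := by
  rintro _ ⟨f, hf, rfl⟩ _ ⟨g, hg, rfl⟩ h
  exact Quot.sound (hf.reparamEquiv_of_range_eq hg h)

theorem traceLE_iff {a b : Trace X} :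
    TraceLE a b ↔ a.IsDirected ∧ b.IsDirected ∧ a.image ⊆ b.image := by
  constructor
  · rintro ⟨f, u, v, hf, hu, hv, huf, hfv, rfl, rfl⟩
    refine ⟨⟨f, hf, rfl⟩, ⟨_, hu.concat_concat hf hv huf hfv, rfl⟩, ?_⟩
    rw [image_trc, image_trc, range_concatFun_concatFun hu.1 hf.1 hv.1 huf hfv]
    exact subset_union_right.trans subset_union_left
  · rintro ⟨⟨f, hf, rfl⟩, ⟨g, hg, rfl⟩, h⟩
    obtain ⟨u, v, hu, hv, huf, hfv, hrange⟩ := hf.exists_range_eq_union hg h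
    refine ⟨f, u, v, hf, hu, hv, huf, hfv, rfl,
      image_injOn ⟨g, hg, rfl⟩ ⟨_, hu.concat_concat hf hv huf hfv, rfl⟩ ?_⟩
    rw [image_trc, image_trc, range_concatFun_concatFun hu.1 hf.1 hv.1 huf hfv, hrange]

end Trace

/-- For a pospace `X` (Hausdorff, with closed partial order), the extension
relation on traces of `X` is a partial order: reflexive, transitive and antisymmetric. -/
theorem traceLE_is_partial_order
    {X : Type*} [TopologicalSpace X] [PartialOrder X] [T2Space X] [OrderClosedTopology X] :
    (∀ f : unitInterval → X, IsDipath f → TraceLE (trc f) (trc f)) ∧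
    (∀ a b c : Trace X, TraceLE a b → TraceLE b c → TraceLE a c) ∧
    (∀ a b : Trace X, TraceLE a b → TraceLE b a → a = b) := by
  simp only [Trace.traceLE_iff]
  refine ⟨fun f hf => ?_, ?_, ?_⟩
  · exact ⟨⟨f, hf, rfl⟩, ⟨f, hf, rfl⟩, Subset.rfl⟩
  · rintro a b c ⟨ha, -, hab⟩ ⟨-, hc, hbc⟩
    exact ⟨ha, hc, hab.trans hbc⟩
  · rintro a b ⟨ha, hb, hab⟩ ⟨-, -, hba⟩
    exact Trace.image_injOn ha hb (hab.antisymm hba)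

end
end

section
/- Let X be a pospace and p a dipath in X. Then either p is constant (its image is a singleton), or there exists a bijection h : [0,1] → p([0,1]) that is simultaneously a homeomorphism onto the image with its subspace topology and an order isomorphism onto the image with the order induced from X. -/
open unitInterval

noncomputable section

/-!
The image of a dipath is a compact, connected, separable chain. On a compact chain in a pospace the
subspace topology is the order topology, so connectedness makes the order dense. Cantor's
back-and-forth theorem matches a countable dense subset of a nontrivial such chain with one of
`[0,1]`. Completeness of `[0,1]` extends this matching to a strictly monotone map with dense range;
such a map is continuous, and by compactness of the chain it is onto.
-/

open Set TopologicalSpace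

section DenseSubset

variable {α β : Type*} [LinearOrder α] [TopologicalSpace α] [OrderClosedTopology α]
  [DenselyOrdered α] {s : Set α}

theorem denselyOrdered_coe_of_dense (hs : Dense s) : DenselyOrdered s where
  dense x y hxy := by
    obtain ⟨z, hzs, hxz, hzy⟩ := hs.exists_between (Subtype.coe_lt_coe.2 hxy)
    exact ⟨⟨z, hzs⟩, hxz, hzy⟩

theorem noMinOrder_coe_of_dense (hs : Dense s) (hbot : ∀ x, IsBot x → x ∉ s) :
    NoMinOrder s where
  exists_lt x := by
    obtain ⟨y, hyx⟩ := not_isMin_iff.1 fun hx ↦ hbot x hx.isBot x.2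
    obtain ⟨z, hzs, -, hzx⟩ := hs.exists_between hyx
    exact ⟨⟨z, hzs⟩, hzx⟩

theorem noMaxOrder_coe_of_dense (hs : Dense s) (htop : ∀ x, IsTop x → x ∉ s) :
    NoMaxOrder s where
  exists_gt x := by
    obtain ⟨y, hxy⟩ := not_isMax_iff.1 fun hx ↦ htop x hx.isTop x.2
    obtain ⟨z, hzs, hxz, -⟩ := hs.exists_between hxy
    exact ⟨⟨z, hzs⟩, hxz⟩

theorem exists_strictMono_extension_of_dense [CompleteLattice β] (hs : Dense s) {φ : s → β}
    (hφ : StrictMono φ) : ∃ f : α → β, StrictMono f ∧ ∀ d : s, f d = φ d := by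
  let f : α → β := fun x ↦ sSup (φ '' {d | ↑d ≤ x})
  have le_f {d : s} {x : α} (hdx : ↑d ≤ x) : φ d ≤ f x := le_sSup (mem_image_of_mem φ hdx)
  have f_le {x : α} {d : s} (hxd : x ≤ d) : f x ≤ φ d := by
    refine sSup_le (forall_mem_image.2 fun e hex ↦ hφ.monotone ?_)
    exact Subtype.coe_le_coe.1 (le_trans hex hxd)
  refine ⟨f, fun x y hxy ↦ ?_, fun d ↦ (f_le le_rfl).antisymm (le_f le_rfl)⟩
  obtain ⟨e, hes, hxe, hey⟩ := hs.exists_between hxy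
  obtain ⟨d, hds, hxd, hde⟩ := hs.exists_between hxe
  calc
    f x ≤ φ ⟨d, hds⟩ := f_le hxd.le
    _ < φ ⟨e, hes⟩ := hφ hde
    _ ≤ f y := le_f hey.le

end DenseSubset

section SeparableOrder

variable (α β : Type*) [LinearOrder α] [TopologicalSpace α] [OrderTopology α] [DenselyOrdered α]
  [SeparableSpace α] [Nontrivial α]

theorem exists_countable_dense_noMinOrder_noMaxOrder :
    ∃ s : Set α, Countable s ∧ Dense s ∧ DenselyOrdered s ∧ NoMinOrder s ∧ NoMaxOrder s := by
  obtain ⟨s, hcount, hs, hbot, htop⟩ := exists_countable_dense_no_bot_top α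
  exact ⟨s, hcount.to_subtype, hs, denselyOrdered_coe_of_dense hs,
    noMinOrder_coe_of_dense hs hbot, noMaxOrder_coe_of_dense hs htop⟩

variable [CompleteLinearOrder β] [TopologicalSpace β] [OrderTopology β] [DenselyOrdered β]
  [SeparableSpace β] [Nontrivial β]

theorem exists_strictMono_denseRange : ∃ f : α → β, StrictMono f ∧ DenseRange f := by
  obtain ⟨s, _, hs, _, _, _⟩ := exists_countable_dense_noMinOrder_noMaxOrder α
  obtain ⟨t, _, ht, _, _, _⟩ := exists_countable_dense_noMinOrder_noMaxOrder β
  have : Nonempty s := hs.nonempty.to_subtype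
  have : Nonempty t := ht.nonempty.to_subtype
  obtain ⟨φ⟩ := Order.iso_of_countable_dense s t
  obtain ⟨f, hf, hfφ⟩ := exists_strictMono_extension_of_dense hs
    ((Subtype.strictMono_coe (· ∈ t)).comp φ.strictMono)
  refine ⟨f, hf, ht.mono fun y hy ↦ ⟨φ.symm ⟨y, hy⟩, ?_⟩⟩
  rw [hfφ, Function.comp_apply, φ.apply_symm_apply]

theorem nonempty_orderIso_of_compactSpace [CompactSpace α] : Nonempty (α ≃o β) := by
  obtain ⟨f, hmono, hdense⟩ := exists_strictMono_denseRange α β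
  have hcont : Continuous f := hmono.monotone.continuous_of_denseRange hdense
  have hsurj : Function.Surjective f :=
    range_eq_univ.1 ((isCompact_range hcont).isClosed.closure_eq ▸ hdense.closure_range)
  exact ⟨hmono.orderIsoOfSurjective f hsurj⟩

end SeparableOrder

theorem topology_eq_of_le_of_compactSpace_of_t2Space {α : Type*} {t t' : TopologicalSpace α}
    (hcompact : @CompactSpace α t) (ht2 : @T2Space α t') (hle : t ≤ t') : t = t' := by
  have isClosedMap_id : @IsClosedMap α α t t' id :=
    @Continuous.isClosedMap α α t t' hcompact ht2 id (continuous_id_of_le hle)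
  refine TopologicalSpace.ext_isClosed fun s ↦ ⟨fun hs ↦ ?_, fun hs ↦ hs.mono hle⟩
  simpa only [image_id] using isClosedMap_id s hs

section CompactOrder

variable (α : Type*) [LinearOrder α] [TopologicalSpace α] [OrderClosedTopology α] [CompactSpace α]

theorem orderTopology_of_compactSpace : OrderTopology α where
  topology_eq_generate_intervals := by
    have ht2 : @T2Space α (Preorder.topology α) :=
      let _ := Preorder.topology α
      have : OrderTopology α := ⟨rfl⟩
      inferInstance
    refine topology_eq_of_le_of_compactSpace_of_t2Space inferInstance ht2 (le_generateFrom ?_)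
    rintro _ ⟨a, rfl | rfl⟩
    exacts [isOpen_Ioi, isOpen_Iio]

theorem exists_orderIso_unitInterval_continuous [PreconnectedSpace α] [SeparableSpace α]
    [Nontrivial α] : ∃ h : I ≃o α, Continuous h ∧ Continuous h.symm := by
  have : OrderTopology α := orderTopology_of_compactSpace α
  have : DenselyOrdered α := denselyOrdered_of_preconnectedSpace
  obtain ⟨e⟩ := nonempty_orderIso_of_compactSpace α I
  exact ⟨e.symm, e.symm.continuous, e.continuous⟩

end CompactOrder

theorem dipath_constant_or_iso_image_general
    {K X : Type*} [TopologicalSpace K] [CompactSpace K] [ConnectedSpace K] [SeparableSpace K]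
    [TopologicalSpace X] [PartialOrder X] [OrderClosedTopology X]
    (p : K → X) (hcont : Continuous p) (hchain : IsChain (· ≤ ·) (range p)) :
    (∃ x : X, ∀ t, p t = x) ∨ ∃ h : I ≃o range p, Continuous h ∧ Continuous h.symm := by
  classical
  rcases (range p).subsingleton_or_nontrivial with hconst | hnontrivial
  · obtain ⟨t₀⟩ : Nonempty K := inferInstance
    exact .inl ⟨p t₀, fun t ↦ hconst (mem_range_self t) (mem_range_self t₀)⟩
  · let : LinearOrder (range p) := hchain.linearOrder
    have : Nontrivial (range p) := hnontrivial.coe_sort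
    have : CompactSpace (range p) := isCompact_iff_compactSpace.1 (isCompact_range hcont)
    have : PreconnectedSpace (range p) :=
      isPreconnected_iff_preconnectedSpace.1 (isPreconnected_range hcont)
    have : SeparableSpace (range p) :=
      rangeFactorization_surjective.denseRange.separableSpace hcont.rangeFactorization
    exact .inr (exists_orderIso_unitInterval_continuous (range p))

/-- In a pospace `X` (Hausdorff, with closed partial order), any dipath
`p : [0,1] → X` (continuous and monotone) is either constant (its image is a singleton), or
there is a bijection `h` from `[0,1]` onto the image of `p` which is simultaneously an order
isomorphism (for the order induced from `X`) and a homeomorphism (for the subspace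
topology). -/
theorem dipath_constant_or_iso_image
    {X : Type*} [TopologicalSpace X] [PartialOrder X] [T2Space X] [OrderClosedTopology X]
    (p : unitInterval → X) (hcont : Continuous p) (hmono : Monotone p) :
    (∃ x : X, ∀ t, p t = x) ∨
    ∃ h : unitInterval ≃o Set.range p, Continuous h ∧ Continuous h.symm :=
  dipath_constant_or_iso_image_general p hcont hmono.isChain_range

end
end

section
/- Let P be a poset, C a cocomplete category, and D : P → C a functor (P viewed as a category). Let Φ be a set of sub-posets of P, partially ordered by inclusion, such that P together with the inclusion maps is the colimit, in the category of posets and monotone maps, of the diagram of inclusions among the members of Φ. Then (P, D), together with the morphisms (ι_p, identity) : (P_p, D restricted to P_p) → (P, D) for p ∈ Φ (ι_p the inclusion), is a colimit cocone in Pers(C) over the functor Φ → Pers(C) sending p to (P_p, D restricted to P_p) and each inclusion P_p ⊆ P_q to the morphism (inclusion, identity). -/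
open CategoryTheory

universe u v w

/-!
A morphism `(P, D) ⟶ (Q, G)` of `Pers(C)` is a section of the projection from the comma category
of `D` and `G` to `P`. This comma category is thin because `P` and `Q` are, so such a section is
just a monotone map into the preorder `X ≤ Y ↔ Nonempty (X ⟶ Y)`. Hence the universal property of
`P` among posets, applied to this preorder, also yields naturality along the relations `x ≤ y` of
`P` that hold in no single member of `Φ`.
-/

/-- A point of a member of `Φ`, remembering the member: the disjoint union of the members of `Φ`. -/
structure CoverPoint {P : Type w} (Φ : Set (Set P)) : Type w where
  carrier : Set P
  carrier_mem : carrier ∈ Φ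
  point : ↥carrier

section SubposetColimit

variable {P : Type w} [PartialOrder P]

/-- `P`, with the inclusions of the members of `Φ`, is the colimit in the category of posets of the
diagram of inclusions among the members of `Φ`. Only posets in the universe of `P` are tested. -/
def IsSubposetColimit (Φ : Set (Set P)) : Prop :=
  ∀ (Q : Type w) [PartialOrder Q] (h : ∀ S ∈ Φ, (↥S →o Q)),
    (∀ (S : Set P) (hS : S ∈ Φ) (S' : Set P) (hS' : S' ∈ Φ) (hsub : S ⊆ S') (x : ↥S),
      h S' hS' ⟨x.1, hsub x.2⟩ = h S hS x) →
    ∃! H : P →o Q, ∀ (S : Set P) (hS : S ∈ Φ) (x : ↥S), H x.1 = h S hS x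

namespace IsSubposetColimit

variable {Φ : Set (Set P)}

-- The indicators of `x ≤ ·` and `x < ·` differ only at `x`.
theorem exists_mem (hΦ : IsSubposetColimit Φ) (x : P) : ∃ S ∈ Φ, x ∈ S := by
  by_contra! hx
  let upper : P →o ULift.{w} Prop := ⟨fun y => ⟨x ≤ y⟩, fun _ _ hab hxa => le_trans hxa hab⟩
  let strictUpper : P →o ULift.{w} Prop :=
    ⟨fun y => ⟨x < y⟩, fun _ _ hab hxa => lt_of_lt_of_le hxa hab⟩
  have agree (S : Set P) (hS : S ∈ Φ) (y : ↥S) : strictUpper y = upper y :=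
    have hne : x ≠ y := fun hxy => hx S hS (hxy ▸ y.2)
    congrArg ULift.up (propext hne.le_iff_lt.symm)
  have upper_eq : upper = strictUpper :=
    (hΦ (ULift.{w} Prop) (fun S _ => upper.comp (OrderHom.Subtype.val (· ∈ S)))
      fun _ _ _ _ _ _ => rfl).unique (fun _ _ _ => rfl) agree
  have down_eq : (x ≤ x) = (x < x) := congrArg (fun H : P →o ULift.{w} Prop => (H x).down) upper_eq
  exact lt_irrefl x (down_eq ▸ le_rfl)

-- Pulling the preorder back to `CoverPoint Φ` brings it into the universe of `P`.
theorem le_of_le (hΦ : IsSubposetColimit Φ) {R : Type*} [Preorder R] (g : ∀ S ∈ Φ, (↥S →o R))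
    (hg : ∀ (S : Set P) (hS : S ∈ Φ) (S' : Set P) (hS' : S' ∈ Φ) (hsub : S ⊆ S') (x : ↥S),
      AntisymmRel (· ≤ ·) (g S' hS' ⟨x.1, hsub x.2⟩) (g S hS x))
    {S S' : Set P} (hS : S ∈ Φ) (hS' : S' ∈ Φ) {x : ↥S} {y : ↥S'} (hxy : x.1 ≤ y.1) :
    g S hS x ≤ g S' hS' y := by
  let _ : Preorder (CoverPoint Φ) :=
    Preorder.lift fun a => g a.carrier a.carrier_mem a.point
  let toQuotient (T : Set P) (hT : T ∈ Φ) : ↥T →o Antisymmetrization (CoverPoint Φ) (· ≤ ·) :=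
    ⟨fun z => toAntisymmetrization (· ≤ ·) ⟨T, hT, z⟩, fun _ _ hzz' => (g T hT).monotone hzz'⟩
  obtain ⟨H, hH, -⟩ := hΦ _ toQuotient fun T hT T' hT' hsub z =>
    Quotient.sound (hg T hT T' hT' hsub z)
  have classes_le : toQuotient S hS x ≤ toQuotient S' hS' y := by
    rw [← hH S hS x, ← hH S' hS' y]
    exact H.monotone hxy
  exact classes_le

theorem existsUnique_orderHom (hΦ : IsSubposetColimit Φ) {Q : Type*} [PartialOrder Q]
    (h : ∀ S ∈ Φ, (↥S →o Q))
    (hh : ∀ (S : Set P) (hS : S ∈ Φ) (S' : Set P) (hS' : S' ∈ Φ) (hsub : S ⊆ S') (x : ↥S),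
      h S' hS' ⟨x.1, hsub x.2⟩ = h S hS x) :
    ∃! H : P →o Q, ∀ (S : Set P) (hS : S ∈ Φ) (x : ↥S), H x.1 = h S hS x := by
  have h_le {S S' : Set P} (hS : S ∈ Φ) (hS' : S' ∈ Φ) {x : ↥S} {y : ↥S'} (hxy : x.1 ≤ y.1) :
      h S hS x ≤ h S' hS' y :=
    hΦ.le_of_le h (fun S hS S' hS' hsub x => AntisymmRel.of_eq (hh S hS S' hS' hsub x)) hS hS' hxy
  choose c hc hxc using hΦ.exists_mem
  refine ⟨⟨fun x => h (c x) (hc x) ⟨x, hxc x⟩, fun x y hxy => h_le _ _ hxy⟩, ?_, ?_⟩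
  · exact fun S hS x => le_antisymm (h_le _ _ le_rfl) (h_le _ _ le_rfl)
  · exact fun K hK => OrderHom.ext _ _ (funext fun x => hK (c x) (hc x) ⟨x, hxc x⟩)

end IsSubposetColimit

end SubposetColimit

section PersCocone

variable {C : Type u} [Category.{v} C] {P : Type w} [PartialOrder P] {Q : Type*} [PartialOrder Q]

/-- A cocone in `Pers(C)` with vertex `(Q, G)` over the diagram sending `S ∈ Φ` to `(S, D|_S)`, in
components: the leg at `S` is `(φ S, σ S)`. As the legs are compatible only up to equality of
points of `Q`, their second components are compared along `eqToHom`. -/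
structure PersCocone (D : P ⥤ C) (Φ : Set (Set P)) (G : Q ⥤ C) where
  φ : ∀ S ∈ Φ, (↥S →o Q)
  σ : ∀ (S : Set P) (hS : S ∈ Φ) (x : ↥S), D.obj x.1 ⟶ G.obj (φ S hS x)
  naturality : ∀ (S : Set P) (hS : S ∈ Φ) (x y : ↥S) (hxy : x ≤ y),
    D.map (homOfLE (show x.1 ≤ y.1 from hxy)) ≫ σ S hS y =
      σ S hS x ≫ G.map (homOfLE ((φ S hS).monotone hxy))
  φ_compat : ∀ (S : Set P) (hS : S ∈ Φ) (S' : Set P) (hS' : S' ∈ Φ) (hsub : S ⊆ S') (x : ↥S),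
    φ S' hS' ⟨x.1, hsub x.2⟩ = φ S hS x
  σ_compat : ∀ (S : Set P) (hS : S ∈ Φ) (S' : Set P) (hS' : S' ∈ Φ) (hsub : S ⊆ S') (x : ↥S),
    σ S' hS' ⟨x.1, hsub x.2⟩ =
      σ S hS x ≫ eqToHom (congrArg G.obj (φ_compat S hS S' hS' hsub x).symm)

namespace PersCocone

variable {D : P ⥤ C} {Φ : Set (Set P)} {G : Q ⥤ C} (s : PersCocone D Φ G)

/-- The leg of `s` at `S` as a map into the comma category of `D` and `G`. Its target is made a
preorder by passing to the thin skeleton, where `X ≤ Y` means `Nonempty (X ⟶ Y)`. -/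
def commaLeg (S : Set P) (hS : S ∈ Φ) : ↥S →o ThinSkeleton (Comma D G) where
  toFun x := ThinSkeleton.mk (Comma.mk x.1 (s.φ S hS x) (s.σ S hS x))
  monotone' x y hxy :=
    ⟨CommaMorphism.mk (homOfLE hxy) (homOfLE ((s.φ S hS).monotone hxy))
      (s.naturality S hS x y hxy)⟩

theorem commaLeg_compat {S S' : Set P} (hS : S ∈ Φ) (hS' : S' ∈ Φ) (hsub : S ⊆ S') (x : ↥S) :
    s.commaLeg S' hS' ⟨x.1, hsub x.2⟩ = s.commaLeg S hS x :=
  Quotient.sound ⟨Comma.isoMk (Iso.refl x.1) (eqToIso (s.φ_compat S hS S' hS' hsub x))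
    (by simp [s.σ_compat S hS S' hS' hsub x, eqToHom_map])⟩

theorem exists_map_comp_σ (hΦ : IsSubposetColimit Φ) {S S' : Set P} (hS : S ∈ Φ) (hS' : S' ∈ Φ)
    {x : ↥S} {y : ↥S'} (hxy : x.1 ≤ y.1) :
    ∃ h : s.φ S hS x ≤ s.φ S' hS' y,
      D.map (homOfLE hxy) ≫ s.σ S' hS' y = s.σ S hS x ≫ G.map (homOfLE h) := by
  obtain ⟨f⟩ : s.commaLeg S hS x ≤ s.commaLeg S' hS' y :=
    hΦ.le_of_le s.commaLeg
      (fun _ hT _ hT' hsub z => AntisymmRel.of_eq (s.commaLeg_compat hT hT' hsub z)) hS hS' hxy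
  exact ⟨leOfHom f.right, f.w⟩

variable {H : P →o Q} (hH : ∀ (S : Set P) (hS : S ∈ Φ) (x : ↥S), H x.1 = s.φ S hS x)

/-- The component at `x : S` of the leg `(φ S, σ S)`, with its target moved from `G (φ S x)` to
`G (H x)` for a monotone map `H` on `P` extending the `φ S`. -/
def component (S : Set P) (hS : S ∈ Φ) (x : ↥S) : D.obj x.1 ⟶ G.obj (H x.1) :=
  s.σ S hS x ≫ eqToHom (congrArg G.obj (hH S hS x).symm)

theorem map_comp_component (hΦ : IsSubposetColimit Φ) {S S' : Set P} (hS : S ∈ Φ) (hS' : S' ∈ Φ)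
    {x : ↥S} {y : ↥S'} (hxy : x.1 ≤ y.1) :
    D.map (homOfLE hxy) ≫ s.component hH S' hS' y =
      s.component hH S hS x ≫ G.map (homOfLE (H.monotone hxy)) := by
  obtain ⟨h, square⟩ := s.exists_map_comp_σ hΦ hS hS' hxy
  rw [component, component, ← eqToHom_map G (hH S hS x).symm, ← eqToHom_map G (hH S' hS' y).symm,
    ← Category.assoc, square, Category.assoc, Category.assoc, ← G.map_comp, ← G.map_comp]
  rfl

theorem component_eq_component (hΦ : IsSubposetColimit Φ) {S S' : Set P} (hS : S ∈ Φ)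
    (hS' : S' ∈ Φ) {x : P} (hx : x ∈ S) (hx' : x ∈ S') :
    s.component hH S hS ⟨x, hx⟩ = s.component hH S' hS' ⟨x, hx'⟩ := by
  simpa using (s.map_comp_component hH hΦ hS hS' (x := ⟨x, hx⟩) (y := ⟨x, hx'⟩) le_rfl).symm

end PersCocone

theorem persistence_colimit_of_subposet_cover_general {D : P ⥤ C} {Φ : Set (Set P)}
    {G : Q ⥤ C} (hΦ : IsSubposetColimit Φ) (s : PersCocone D Φ G) :
    ∃! Hσ : Σ' H : P →o Q, ∀ x : P, D.obj x ⟶ G.obj (H x),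
      (∀ (x y : P) (hxy : x ≤ y),
        D.map (homOfLE hxy) ≫ Hσ.2 y = Hσ.2 x ≫ G.map (homOfLE (Hσ.1.monotone hxy))) ∧
      (∀ (S : Set P) (hS : S ∈ Φ) (x : ↥S),
        ∃ h : Hσ.1 x.1 = s.φ S hS x,
          Hσ.2 x.1 = s.σ S hS x ≫ eqToHom (congrArg G.obj h.symm)) := by
  obtain ⟨H, hH, H_unique⟩ := hΦ.existsUnique_orderHom s.φ s.φ_compat
  choose c hc hxc using hΦ.exists_mem
  refine ⟨⟨H, fun x => s.component hH (c x) (hc x) ⟨x, hxc x⟩⟩, ⟨?natural, ?factors⟩, ?unique⟩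
  case natural =>
    exact fun x y hxy =>
      s.map_comp_component hH hΦ (hc x) (hc y) (x := ⟨x, hxc x⟩) (y := ⟨y, hxc y⟩) hxy
  case factors =>
    exact fun S hS x => ⟨hH S hS x, s.component_eq_component hH hΦ (hc x) hS (hxc x) x.2⟩
  case unique =>
    rintro ⟨K, τ⟩ ⟨-, hK⟩
    obtain rfl : K = H := H_unique K fun S hS x => (hK S hS x).1
    have τ_eq : τ = fun x => s.component hH (c x) (hc x) ⟨x, hxc x⟩ :=
      funext fun x => (hK (c x) (hc x) ⟨x, hxc x⟩).2
    rw [τ_eq]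

end PersCocone

/-- Let `P` be a poset, `C` a cocomplete category, `D : P ⥤ C` a functor, and
`Φ` a set of sub-posets of `P` such that `P` (with the inclusion maps) is the colimit, in the
category of posets and monotone maps, of the diagram of inclusions among the members of `Φ`.
Then `(P, D)`, with the morphisms `(inclusion, identity)`, is a colimit cocone in `Pers(C)` over
the diagram `p ↦ (P_p, D|_{P_p})`.  A morphism `(P,F) → (Q,G)` of `Pers(C)` is presented here
componentwise: a monotone map `φ` together with maps `σ_x : F x ⟶ G (φ x)` natural in `x`. -/
theorem persistence_colimit_of_subposet_cover
    {C : Type u} [Category.{v} C] [Limits.HasColimits C]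
    {P : Type w} [PartialOrder P] (D : P ⥤ C) (Φ : Set (Set P))
    -- `P` is the colimit in `Pos` of the diagram of inclusions among the members of `Φ`
    (hcolim : ∀ (Q : Type w) [PartialOrder Q] (h : ∀ S ∈ Φ, (↥S →o Q)),
      (∀ (S : Set P) (hS : S ∈ Φ) (S' : Set P) (hS' : S' ∈ Φ) (hsub : S ⊆ S') (x : ↥S),
        h S' hS' ⟨x.1, hsub x.2⟩ = h S hS x) →
      ∃! H : P →o Q, ∀ (S : Set P) (hS : S ∈ Φ) (x : ↥S), H x.1 = h S hS x) :
    -- conclusion: universal property of the cocone `(P, D)` in `Pers(C)`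
    ∀ (Q : Type w) [PartialOrder Q] (G : Q ⥤ C)
      (φ : ∀ S ∈ Φ, (↥S →o Q))
      (σ : ∀ (S : Set P) (hS : S ∈ Φ) (x : ↥S), D.obj x.1 ⟶ G.obj (φ S hS x)),
      -- each `(φ_S, σ_S)` is a morphism `(S, D|_S) → (Q, G)` in `Pers(C)`:
      (∀ (S : Set P) (hS : S ∈ Φ) (x y : ↥S) (hxy : x ≤ y),
        D.map (homOfLE (show x.1 ≤ y.1 from hxy)) ≫ σ S hS y =
          σ S hS x ≫ G.map (homOfLE ((φ S hS).monotone hxy))) →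
      -- the family is compatible with the inclusions among members of `Φ`:
      ∀ (hφ : ∀ (S : Set P) (hS : S ∈ Φ) (S' : Set P) (hS' : S' ∈ Φ) (hsub : S ⊆ S') (x : ↥S),
          φ S' hS' ⟨x.1, hsub x.2⟩ = φ S hS x),
      (∀ (S : Set P) (hS : S ∈ Φ) (S' : Set P) (hS' : S' ∈ Φ) (hsub : S ⊆ S') (x : ↥S),
        σ S' hS' ⟨x.1, hsub x.2⟩ =
          σ S hS x ≫ eqToHom (congrArg G.obj (hφ S hS S' hS' hsub x).symm)) →
      -- there is a unique morphism `(P, D) → (Q, G)` in `Pers(C)` through which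
      -- every `(φ_S, σ_S)` factors via `(inclusion, identity)`
      ∃! Hσ : Σ' H : P →o Q, ∀ x : P, D.obj x ⟶ G.obj (H x),
        (∀ (x y : P) (hxy : x ≤ y),
          D.map (homOfLE hxy) ≫ Hσ.2 y = Hσ.2 x ≫ G.map (homOfLE (Hσ.1.monotone hxy))) ∧
        (∀ (S : Set P) (hS : S ∈ Φ) (x : ↥S),
          ∃ h : Hσ.1 x.1 = φ S hS x,
            Hσ.2 x.1 = σ S hS x ≫ eqToHom (congrArg G.obj h.symm)) :=
  fun _ _ _ φ σ hnat hφ hσ =>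
    persistence_colimit_of_subposet_cover_general hcolim ⟨φ, σ, hnat, hφ, hσ⟩
end

section
/- Let X be a pospace, k a field, and n ≥ 1. The pair (tpos(X), H⃗_n(X;k)), together with the morphisms (inclusion, identity) from each restriction, is the colimit in Pers(Vect_k) of the diagram over the chains of tpos(X) sending each chain C (with the induced order) to (C, H⃗_n(X;k) restricted to C), and each inclusion of chains to the morphism (inclusion, identity). That is, the natural homology of X is the colimit in Pers(Vect_k) of the persistent homology along each of its traces. -/
open CategoryTheory

noncomputable section

/-- Traces of directed paths. -/
def IsDiTrace {X : Type*} [TopologicalSpace X] [PartialOrder X] (a : Trace X) : Prop :=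
  ∃ f, IsDipath f ∧ a = trc f

/-- The trace poset `tpos(X)` of a pospace: traces of directed paths, ordered by extension. -/
def TPos (X : Type*) [TopologicalSpace X] [PartialOrder X] : Type _ :=
  {a : Trace X // IsDiTrace a}

/-- The order of the trace poset. -/
def TPosLE {X : Type*} [TopologicalSpace X] [PartialOrder X] (a b : TPos X) : Prop :=
  TraceLE a.1 b.1

/-- Initial point of a trace. -/
def Trace.src {X : Type*} (a : Trace X) : X :=
  Quot.lift (fun f => f 0)
    (fun f g h => by
      obtain ⟨φ, ψ, hφ, hψ, hfg⟩ := h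
      have h0 : f (φ 0) = g (ψ 0) := congrFun hfg 0
      rwa [hφ.2.2.1, hψ.2.2.1] at h0) a

/-- Terminal point of a trace. -/
def Trace.tgt {X : Type*} (a : Trace X) : X :=
  Quot.lift (fun f => f 1)
    (fun f g h => by
      obtain ⟨φ, ψ, hφ, hψ, hfg⟩ := h
      have h1 : f (φ 1) = g (ψ 1) := congrFun hfg 1
      rwa [hφ.2.2.2, hψ.2.2.2] at h1) a

/-- The space of dipaths from `x` to `y`, with the compact-open topology. -/
abbrev DipathSpace (X : Type) [TopologicalSpace X] [Preorder X] (x y : X) : Type :=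
  {p : C(unitInterval, X) // Monotone p ∧ p 0 = x ∧ p 1 = y}

/-- The trace space from `x` to `y`: dipaths modulo reparametrization, quotient topology. -/
abbrev TraceSpace (X : Type) [TopologicalSpace X] [Preorder X] (x y : X) : Type :=
  Quot (fun p q : DipathSpace X x y => ReparamEquiv (p.1 : unitInterval → X) q.1)

/-- The `m`-th singular homology functor with coefficients in `R`. -/
def SingularH (R : Type) [CommRing R] (m : ℕ) : TopCat.{0} ⥤ ModuleCat.{0} R :=
  TopCat.toSSet ⋙ ((SimplicialObject.whiskering _ _).obj (ModuleCat.free R)) ⋙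
    AlgebraicTopology.alternatingFaceMapComplex _ ⋙ HomologicalComplex.homologyFunctor _ _ m

/-- The object part of the natural homology diagram `H⃗_n(X;k)`:
the `(n-1)`-st singular homology of the trace space between the endpoints of a trace. -/
def Hobj (k : Type) [Field k] (m : ℕ) (X : Type) [TopologicalSpace X] [PartialOrder X]
    (a : TPos X) : ModuleCat k :=
  (SingularH k m).obj (TopCat.of (TraceSpace X a.1.src a.1.tgt))

/-!
The argument is about diagrams on an arbitrary set with a relation. One-element sets are chains, so
a compatible family of morphisms out of the restrictions to chains prescribes the value of the
mediating morphism at every element, which gives uniqueness. Related pairs are chains as well, and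
the leg at the pair `{a, b}` yields monotonicity and naturality of the prescribed values along the
relation from `a` to `b`.
-/

universe u v w z

section PersistenceMorphisms

variable {P : Type u} {C : Type v} [Category.{w} C] {Q : Type z}

theorem psigma_ext_of_eqToHom {F : P → C} {G : Q → C} {τ τ' : Σ' H : P → Q, ∀ a, F a ⟶ G (H a)}
    (h : ∀ a, ∃ e : τ.1 a = τ'.1 a, τ.2 a = τ'.2 a ≫ eqToHom (congrArg G e.symm)) :
    τ = τ' := by
  obtain ⟨H, s⟩ := τ
  obtain ⟨H', s'⟩ := τ'
  obtain rfl : H = H' := funext fun a => (h a).1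
  have hs : s = s' := funext fun a => (h a).2.trans (Category.comp_id _)
  rw [hs]

theorem map_homOfLE_comp_eqToHom [Preorder Q] (G : Q ⥤ C) {p p' q q' : Q}
    (hp : p = p') (hq : q = q') (h : p ≤ q) (h' : p' ≤ q') :
    G.map (homOfLE h) ≫ eqToHom (congrArg G.obj hq) =
      eqToHom (congrArg G.obj hp) ≫ G.map (homOfLE h') := by
  subst hp hq
  simp

end PersistenceMorphisms

/-- A cocone with vertex `(Q, G)` in the category of persistence objects, under the diagram of
restrictions to all chains of `r` of the diagram on `P` with objects `F a` and transition morphisms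
`Fmap`. Its leg at the chain `S` is the morphism `(toFun S, app S)`. Equality of morphisms of
persistence objects is expressed componentwise, the second components being compared along
`eqToHom`. -/
structure ChainCocone {P : Type u} (r : P → P → Prop) {C : Type v} [Category.{w} C] {F : P → C}
    (Fmap : ∀ a b, r a b → (F a ⟶ F b)) {Q : Type z} [Preorder Q] (G : Q ⥤ C) where
  toFun : ∀ S : Set P, IsChain r S → S → Q
  monotone : ∀ (S : Set P) (hS : IsChain r S) (x y : S), r x.1 y.1 → toFun S hS x ≤ toFun S hS y
  app : ∀ (S : Set P) (hS : IsChain r S) (x : S), F x.1 ⟶ G.obj (toFun S hS x)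
  naturality : ∀ (S : Set P) (hS : IsChain r S) (x y : S) (h : r x.1 y.1),
    Fmap x.1 y.1 h ≫ app S hS y = app S hS x ≫ G.map (homOfLE (monotone S hS x y h))
  toFun_of_subset : ∀ (S : Set P) (hS : IsChain r S) (S' : Set P) (hS' : IsChain r S')
    (hsub : S ⊆ S') (x : S),
    toFun S' hS' ⟨x.1, hsub x.2⟩ = toFun S hS x
  app_of_subset : ∀ (S : Set P) (hS : IsChain r S) (S' : Set P) (hS' : IsChain r S')
    (hsub : S ⊆ S') (x : S),
    app S' hS' ⟨x.1, hsub x.2⟩ =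
      app S hS x ≫ eqToHom (congrArg G.obj (toFun_of_subset S hS S' hS' hsub x).symm)

namespace ChainCocone

variable {P : Type u} {r : P → P → Prop} {C : Type v} [Category.{w} C] {F : P → C}
  {Fmap : ∀ a b, r a b → (F a ⟶ F b)} {Q : Type z} [Preorder Q] {G : Q ⥤ C}
  (c : ChainCocone r Fmap G)

/-- The map `P → Q` underlying the mediating morphism of a chain cocone, read off from the legs at
the one-element chains. -/
def descFun (a : P) : Q :=
  c.toFun {a} IsChain.singleton ⟨a, rfl⟩

/-- The natural transformation underlying the mediating morphism of a chain cocone, read off from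
the legs at the one-element chains. -/
def descApp (a : P) : F a ⟶ G.obj (c.descFun a) :=
  c.app {a} IsChain.singleton ⟨a, rfl⟩

theorem descFun_eq_toFun (S : Set P) (hS : IsChain r S) (x : S) :
    c.descFun x.1 = c.toFun S hS x :=
  (c.toFun_of_subset {x.1} IsChain.singleton S hS (Set.singleton_subset_iff.2 x.2) ⟨x.1, rfl⟩).symm

theorem descApp_eq_app (S : Set P) (hS : IsChain r S) (x : S) :
    c.descApp x.1 = c.app S hS x ≫ eqToHom (congrArg G.obj (c.descFun_eq_toFun S hS x).symm) := by
  have hx : c.app S hS x = c.descApp x.1 ≫ eqToHom (congrArg G.obj (c.descFun_eq_toFun S hS x)) :=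
    c.app_of_subset {x.1} IsChain.singleton S hS (Set.singleton_subset_iff.2 x.2) ⟨x.1, rfl⟩
  exact (comp_eqToHom_iff _ _ _).1 hx.symm

theorem descFun_le_descFun (a b : P) (h : r a b) : c.descFun a ≤ c.descFun b := by
  let x : ({a, b} : Set P) := ⟨a, .inl rfl⟩
  let y : ({a, b} : Set P) := ⟨b, .inr rfl⟩
  have hS : IsChain r {a, b} := IsChain.pair h
  calc
    c.descFun a = c.toFun {a, b} hS x := c.descFun_eq_toFun {a, b} hS x
    _ ≤ c.toFun {a, b} hS y := c.monotone {a, b} hS x y h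
    _ = c.descFun b := (c.descFun_eq_toFun {a, b} hS y).symm

theorem descApp_naturality (a b : P) (h : r a b) :
    Fmap a b h ≫ c.descApp b = c.descApp a ≫ G.map (homOfLE (c.descFun_le_descFun a b h)) := by
  let x : ({a, b} : Set P) := ⟨a, .inl rfl⟩
  let y : ({a, b} : Set P) := ⟨b, .inr rfl⟩
  have hS : IsChain r {a, b} := IsChain.pair h
  have hx := c.descFun_eq_toFun {a, b} hS x
  have hy := c.descFun_eq_toFun {a, b} hS y
  calc
    Fmap a b h ≫ c.descApp b
      = Fmap a b h ≫ c.app {a, b} hS y ≫ eqToHom (congrArg G.obj hy.symm) :=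
        congrArg (Fmap a b h ≫ ·) (c.descApp_eq_app {a, b} hS y)
    _ = c.app {a, b} hS x ≫ G.map (homOfLE (c.monotone {a, b} hS x y h)) ≫
          eqToHom (congrArg G.obj hy.symm) := by
        rw [← Category.assoc, c.naturality {a, b} hS x y h, Category.assoc]
    _ = (c.app {a, b} hS x ≫ eqToHom (congrArg G.obj hx.symm)) ≫
          G.map (homOfLE (c.descFun_le_descFun a b h)) := by
        rw [map_homOfLE_comp_eqToHom G hx.symm hy.symm, Category.assoc]
    _ = c.descApp a ≫ G.map (homOfLE (c.descFun_le_descFun a b h)) :=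
        congrArg (· ≫ G.map _) (c.descApp_eq_app {a, b} hS x).symm

end ChainCocone

theorem natural_homology_is_colimit_of_persistence_along_traces_general
    {P : Type u} {r : P → P → Prop} {C : Type v} [Category.{w} C] {F : P → C}
    {Fmap : ∀ a b, r a b → (F a ⟶ F b)} {Q : Type z} [Preorder Q] {G : Q ⥤ C}
    (c : ChainCocone r Fmap G) :
    ∃! τ : Σ' H : P → Q, ∀ a, F a ⟶ G.obj (H a),
      ∃ hmono : ∀ a b, r a b → τ.1 a ≤ τ.1 b,
        (∀ a b (h : r a b), Fmap a b h ≫ τ.2 b = τ.2 a ≫ G.map (homOfLE (hmono a b h))) ∧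
        (∀ (S : Set P) (hS : IsChain r S) (x : S), ∃ h : τ.1 x.1 = c.toFun S hS x,
          τ.2 x.1 = c.app S hS x ≫ eqToHom (congrArg G.obj h.symm)) := by
  refine ⟨⟨c.descFun, c.descApp⟩, ⟨c.descFun_le_descFun, c.descApp_naturality, fun S hS x =>
    ⟨c.descFun_eq_toFun S hS x, c.descApp_eq_app S hS x⟩⟩, ?_⟩
  rintro τ ⟨-, -, hfac⟩
  exact psigma_ext_of_eqToHom fun a => hfac {a} IsChain.singleton ⟨a, rfl⟩

/-- Let `X` be a pospace, `k` a field and `n ≥ 1`.  The natural homology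
`(tpos(X), H⃗_n(X;k))`, with the morphisms `(inclusion, identity)` from each restriction, is the
colimit in `Pers(Vect_k)` of the diagram over the chains of `tpos(X)`, sending each chain `C` to
`(C, H⃗_n(X;k)|_C)` and each inclusion of chains to `(inclusion, identity)`.  The natural
homology diagram is presented by its object part `Hobj` (defined concretely above) and its map
part `Hmap`, characterized by: it is functorial, and the map attached to an extension
`⟨g⟩ = ⟨u⟩ ⋆ ⟨f⟩ ⋆ ⟨v⟩` is induced in singular homology by the continuous map
`⟨u⟩ ⋆ - ⋆ ⟨v⟩` between trace spaces.  Morphisms of `Pers(Vect_k)` are presented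
componentwise. -/
theorem natural_homology_is_colimit_of_persistence_along_traces
    (k : Type) [Field k] (n : ℕ) (hn : 1 ≤ n)
    (X : Type) [TopologicalSpace X] [PartialOrder X] [T2Space X] [OrderClosedTopology X]
    -- the map part of the natural homology functor H⃗_n(X;k) on tpos(X) ...
    (Hmap : ∀ a b : TPos X, TPosLE a b → (Hobj k (n - 1) X a ⟶ Hobj k (n - 1) X b))
    -- ... which is functorial ...
    (hid : ∀ (a : TPos X) (h : TPosLE a a), Hmap a a h = 𝟙 _)
    (hcomp : ∀ (a b c : TPos X) (hab : TPosLE a b) (hbc : TPosLE b c) (hac : TPosLE a c),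
      Hmap a c hac = Hmap a b hab ≫ Hmap b c hbc)
    -- ... and whose maps are induced in homology by concatenation of the extensions:
    (hinduced : ∀ (a b : TPos X) (h : TPosLE a b),
      ∃ (g : TopCat.of (TraceSpace X a.1.src a.1.tgt) ⟶ TopCat.of (TraceSpace X b.1.src b.1.tgt))
        (u v : unitInterval → X), IsDipath u ∧ IsDipath v ∧
        (∃ f : unitInterval → X, IsDipath f ∧ u 1 = f 0 ∧ f 1 = v 0 ∧
          a.1 = trc f ∧ b.1 = trc (concatFun (concatFun u f) v)) ∧
        (∀ (p : DipathSpace X a.1.src a.1.tgt) (q : DipathSpace X b.1.src b.1.tgt),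
          ReparamEquiv (q.1 : unitInterval → X) (concatFun (concatFun u (p.1 : unitInterval → X)) v) →
          g (Quot.mk _ p) = Quot.mk _ q) ∧
        Hmap a b h = (SingularH k (n - 1)).map g) :
    -- conclusion: `(tpos(X), H⃗_n(X;k))` is a colimit cocone in `Pers(Vect_k)` over
    -- the diagram of restrictions to all chains of `tpos(X)`:
    ∀ (Q : Type) [PartialOrder Q] (G : Q ⥤ ModuleCat k)
      (φ : ∀ S : Set (TPos X), IsChain TPosLE S → (↥S → Q)),
      -- each φ_S monotone, i.e. (φ_S, σ_S) : (S, H|_S) → (Q, G) is a morphism in Pers(Vect_k)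
      ∀ (hφmono : ∀ (S : Set (TPos X)) (hS : IsChain TPosLE S) (x y : ↥S),
          TPosLE x.1 y.1 → φ S hS x ≤ φ S hS y)
        (σ : ∀ (S : Set (TPos X)) (hS : IsChain TPosLE S) (x : ↥S),
          Hobj k (n - 1) X x.1 ⟶ G.obj (φ S hS x)),
        (∀ (S : Set (TPos X)) (hS : IsChain TPosLE S) (x y : ↥S) (h : TPosLE x.1 y.1),
          Hmap x.1 y.1 h ≫ σ S hS y = σ S hS x ≫ G.map (homOfLE (hφmono S hS x y h))) →
        -- compatibility of the family with inclusions of chains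
        ∀ (hφcompat : ∀ (S : Set (TPos X)) (hS : IsChain TPosLE S)
            (S' : Set (TPos X)) (hS' : IsChain TPosLE S') (hsub : S ⊆ S') (x : ↥S),
            φ S' hS' ⟨x.1, hsub x.2⟩ = φ S hS x),
          (∀ (S : Set (TPos X)) (hS : IsChain TPosLE S)
            (S' : Set (TPos X)) (hS' : IsChain TPosLE S') (hsub : S ⊆ S') (x : ↥S),
            σ S' hS' ⟨x.1, hsub x.2⟩ =
              σ S hS x ≫ eqToHom (congrArg G.obj (hφcompat S hS S' hS' hsub x).symm)) →
          -- unique factorization through `(tpos(X), H⃗_n(X;k))`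
          ∃! Hσ : Σ' H : TPos X → Q, ∀ a : TPos X, Hobj k (n - 1) X a ⟶ G.obj (H a),
            ∃ hmono : ∀ a b : TPos X, TPosLE a b → Hσ.1 a ≤ Hσ.1 b,
              (∀ (a b : TPos X) (h : TPosLE a b),
                Hmap a b h ≫ Hσ.2 b = Hσ.2 a ≫ G.map (homOfLE (hmono a b h))) ∧
              (∀ (S : Set (TPos X)) (hS : IsChain TPosLE S) (x : ↥S),
                ∃ h : Hσ.1 x.1 = φ S hS x,
                  Hσ.2 x.1 = σ S hS x ≫ eqToHom (congrArg G.obj h.symm)) := by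
  intro Q _ G φ hφmono σ hσ hφcompat hσcompat
  exact natural_homology_is_colimit_of_persistence_along_traces_general
    ⟨φ, hφmono, σ, hσ, hφcompat, hσcompat⟩

end
end

section
/- Let X be a compact pospace, k a field, and n ≥ 1. The pair (tpos(X), H⃗_n(X;k)), together with the morphisms (inclusion, identity) from each restriction, is the colimit in Pers(Vect_k) of the diagram over the maximal chains of tpos(X) completed with their pairwise intersections, sending each such sub-poset S to (S, H⃗_n(X;k) restricted to S) and each inclusion to the morphism (inclusion, identity). That is, the natural homology of X is the colimit in Pers(Vect_k) of the persistent homology along its maximal traces, seen as maximal chains in tpos(X), completed with pullbacks. -/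
open CategoryTheory

noncomputable section

/-- The sub-posets of the trace poset consisting of the maximal chains together with their
pairwise intersections (their pullbacks in the category of posets). -/
def MaxChainOrInter (X : Type) [TopologicalSpace X] [PartialOrder X]
    (S : Set (TPos X)) : Prop :=
  IsMaxChain TPosLE S ∨
    ∃ C₁ C₂ : Set (TPos X), IsMaxChain TPosLE C₁ ∧ IsMaxChain TPosLE C₂ ∧ S = C₁ ∩ C₂

/-!
For `G : Q ⥤ C`, a morphism `(P, F) ⟶ (Q, G)` of `Pers(C)` is a family of structured arrows
`τ a : F a ⟶ G (φ a)` subject to one condition for each related pair `a ≤ b`. In this form the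
colimit property is a gluing problem for dependent functions on a cover of `P`. By Zorn's lemma,
every related pair lies in a maximal chain, so the maximal chains cover `P` and detect all the
conditions. Two maximal chains give the same value at a common point because their intersection
belongs to the diagram.
-/

section Gluing

variable {P : Type*} {r : P → P → Prop}

/-- The members of the diagram of maximal chains completed with pullbacks, for an arbitrary
relation `r`: the maximal `r`-chains and their pairwise intersections. -/
def IsMaxChainOrInter (r : P → P → Prop) (S : Set P) : Prop :=
  IsMaxChain r S ∨ ∃ C₁ C₂ : Set P, IsMaxChain r C₁ ∧ IsMaxChain r C₂ ∧ S = C₁ ∩ C₂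

theorem exists_isMaxChain_mem (r : P → P → Prop) (a : P) : ∃ D, IsMaxChain r D ∧ a ∈ D := by
  obtain ⟨D, hD, haD⟩ := (IsChain.singleton (r := r) (a := a)).exists_maxChain
  exact ⟨D, hD, haD rfl⟩

theorem exists_isMaxChain_mem_mem {a b : P} (hab : r a b) :
    ∃ D, IsMaxChain r D ∧ a ∈ D ∧ b ∈ D := by
  obtain ⟨D, hD, habD⟩ := (IsChain.pair hab).exists_maxChain
  exact ⟨D, hD, Set.pair_subset_iff.mp habD⟩

theorem IsMaxChainOrInter.exists_isMaxChain_superset {S : Set P} (hS : IsMaxChainOrInter r S) :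
    ∃ D, IsMaxChain r D ∧ S ⊆ D := by
  rcases hS with hS | ⟨C₁, C₂, hC₁, -, rfl⟩
  · exact ⟨S, hS, subset_rfl⟩
  · exact ⟨C₁, hC₁, Set.inter_subset_left⟩

/-- A family of dependent functions on the members of the diagram is a cocone: it commutes with
restriction along the inclusions between members. -/
def IsCompatible (β : P → Sort*) (t : ∀ S, IsMaxChainOrInter r S → ∀ x : S, β x) : Prop :=
  ∀ (S : Set P) (hS : IsMaxChainOrInter r S) (S' : Set P) (hS' : IsMaxChainOrInter r S')
    (hsub : S ⊆ S') (x : S), t S' hS' ⟨x, hsub x.2⟩ = t S hS x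

variable {β : P → Sort*} {t : ∀ S, IsMaxChainOrInter r S → ∀ x : S, β x}

theorem IsCompatible.apply_eq_apply (hcompat : IsCompatible β t)
    {S S' : Set P} (hS : IsMaxChainOrInter r S) (hS' : IsMaxChainOrInter r S')
    {a : P} (ha : a ∈ S) (ha' : a ∈ S') :
    t S hS ⟨a, ha⟩ = t S' hS' ⟨a, ha'⟩ := by
  obtain ⟨D, hD, hSD⟩ := hS.exists_isMaxChain_superset
  obtain ⟨D', hD', hSD'⟩ := hS'.exists_isMaxChain_superset
  have hinter : IsMaxChainOrInter r (D ∩ D') := .inr ⟨D, D', hD, hD', rfl⟩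
  calc t S hS ⟨a, ha⟩
      = t D (.inl hD) ⟨a, hSD ha⟩ := (hcompat _ _ _ _ hSD ⟨a, ha⟩).symm
    _ = t (D ∩ D') hinter ⟨a, hSD ha, hSD' ha'⟩ :=
        hcompat _ _ _ _ Set.inter_subset_left ⟨a, hSD ha, hSD' ha'⟩
    _ = t D' (.inl hD') ⟨a, hSD' ha'⟩ :=
        (hcompat _ _ _ _ Set.inter_subset_right ⟨a, hSD ha, hSD' ha'⟩).symm
    _ = t S' hS' ⟨a, ha'⟩ := hcompat _ _ _ _ hSD' ⟨a, ha'⟩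

theorem IsCompatible.exists_forall_apply_eq (hcompat : IsCompatible β t) :
    ∃ τ : ∀ a, β a, ∀ (S : Set P) hS (x : S), τ x = t S hS x := by
  choose D hD hmem using exists_isMaxChain_mem r
  exact ⟨fun a ↦ t (D a) (.inl (hD a)) ⟨a, hmem a⟩,
    fun S hS x ↦ hcompat.apply_eq_apply _ hS (hmem x) x.2⟩

theorem IsCompatible.existsUnique_rel_and_forall_apply_eq (hcompat : IsCompatible β t)
    {ρ : ∀ a b, r a b → β a → β b → Prop}
    (hρ : ∀ (S : Set P) hS (x y : S) (h : r x y), ρ x y h (t S hS x) (t S hS y)) :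
    ∃! τ : ∀ a, β a,
      (∀ a b (h : r a b), ρ a b h (τ a) (τ b)) ∧ ∀ (S : Set P) hS (x : S), τ x = t S hS x := by
  obtain ⟨τ, hτ⟩ := hcompat.exists_forall_apply_eq
  refine ⟨τ, ⟨fun a b hab ↦ ?_, hτ⟩, fun τ' hτ' ↦ funext fun a ↦ ?_⟩
  · obtain ⟨D, hD, ha, hb⟩ := exists_isMaxChain_mem_mem hab
    rw [hτ D (.inl hD) ⟨a, ha⟩, hτ D (.inl hD) ⟨b, hb⟩]
    exact hρ D (.inl hD) ⟨a, ha⟩ ⟨b, hb⟩ hab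
  · obtain ⟨D, hD, ha⟩ := exists_isMaxChain_mem r a
    rw [hτ'.2 D (.inl hD) ⟨a, ha⟩, hτ D (.inl hD) ⟨a, ha⟩]

end Gluing

section PersistenceMorphisms

variable {C : Type*} [Category* C] {Q : Type*} [Preorder Q] {G : Q ⥤ C}

theorem structuredArrow_mk_eq_mk_iff {A : C} {p q : Q} {f : A ⟶ G.obj p} {g : A ⟶ G.obj q} :
    StructuredArrow.mk f = StructuredArrow.mk g ↔
      ∃ h : p = q, f = g ≫ eqToHom (congrArg G.obj h.symm) := by
  constructor
  · intro h
    cases h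
    exact ⟨rfl, by simp⟩
  · rintro ⟨rfl, rfl⟩
    simp

theorem nonempty_structuredArrow_mk_hom_map_mk_iff {A B : C} {m : A ⟶ B} {p q : Q}
    {f : A ⟶ G.obj p} {g : B ⟶ G.obj q} :
    Nonempty (StructuredArrow.mk f ⟶ (StructuredArrow.map m).obj (StructuredArrow.mk g)) ↔
      ∃ h : p ≤ q, m ≫ g = f ≫ G.map (homOfLE h) :=
  ⟨fun ⟨α⟩ ↦ ⟨leOfHom α.right, (StructuredArrow.w α).symm⟩,
    fun ⟨h, w⟩ ↦ ⟨StructuredArrow.homMk (homOfLE h) w.symm⟩⟩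

variable {P : Type*} {r : P → P → Prop} {F : P → C} (Fmap : ∀ a b, r a b → (F a ⟶ F b))

/-- A family `τ` of structured arrows `τ a : F a ⟶ G (φ a)` is a morphism `(P, F) ⟶ (Q, G)` of
`Pers(C)`: it encodes both components `(φ, σ)`, and the condition says that `φ` is monotone and `σ`
is natural. -/
def IsPersHom (τ : ∀ a, StructuredArrow (F a) G) : Prop :=
  ∀ a b (h : r a b), Nonempty (τ a ⟶ (StructuredArrow.map (Fmap a b h)).obj (τ b))

variable {Fmap} in
theorem isPersHom_mk_iff {φ : P → Q} {σ : ∀ a, F a ⟶ G.obj (φ a)} :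
    IsPersHom Fmap (fun a ↦ StructuredArrow.mk (σ a)) ↔
      ∃ hmono : ∀ a b, r a b → φ a ≤ φ b,
        ∀ a b (h : r a b), Fmap a b h ≫ σ b = σ a ≫ G.map (homOfLE (hmono a b h)) := by
  simp only [IsPersHom, nonempty_structuredArrow_mk_hom_map_mk_iff]
  exact ⟨fun H ↦ ⟨fun a b h ↦ (H a b h).1, fun a b h ↦ (H a b h).2⟩,
    fun ⟨hmono, hnat⟩ a b h ↦ ⟨hmono a b h, hnat a b h⟩⟩

/-- The correspondence between pairs `(φ, σ)` and the families of structured arrows that encode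
them. -/
def structuredArrowFamilyEquiv (F : P → C) (G : Q ⥤ C) :
    (Σ' φ : P → Q, ∀ a, F a ⟶ G.obj (φ a)) ≃ ∀ a, StructuredArrow (F a) G where
  toFun φσ a := StructuredArrow.mk (φσ.2 a)
  invFun τ := ⟨fun a ↦ (τ a).right, fun a ↦ (τ a).hom⟩
  left_inv _ := rfl
  right_inv _ := rfl

theorem IsCompatible.existsUnique_isPersHom
    {t : ∀ S, IsMaxChainOrInter r S → ∀ x : S, StructuredArrow (F x) G}
    (hcompat : IsCompatible (fun a ↦ StructuredArrow (F a) G) t)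
    (ht : ∀ (S : Set P) hS, IsPersHom (r := fun x y : S ↦ r x y) (fun x y ↦ Fmap x y) (t S hS)) :
    ∃! τ : ∀ a, StructuredArrow (F a) G,
      IsPersHom Fmap τ ∧ ∀ (S : Set P) hS (x : S), τ x = t S hS x :=
  hcompat.existsUnique_rel_and_forall_apply_eq
    (ρ := fun a b h x y ↦ Nonempty (x ⟶ (StructuredArrow.map (Fmap a b h)).obj y)) ht

theorem natural_homology_is_colimit_of_persistence_along_maximal_traces_general
    (φ : ∀ S : Set P, IsMaxChainOrInter r S → S → Q)
    (hφmono : ∀ (S : Set P) hS (x y : S), r x y → φ S hS x ≤ φ S hS y)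
    (s : ∀ (S : Set P) hS (x : S), F x ⟶ G.obj (φ S hS x))
    (hnat : ∀ (S : Set P) hS (x y : S) (h : r x y),
      Fmap x y h ≫ s S hS y = s S hS x ≫ G.map (homOfLE (hφmono S hS x y h)))
    (hφcompat : ∀ (S : Set P) hS (S' : Set P) hS' (hsub : S ⊆ S') (x : S),
      φ S' hS' ⟨x, hsub x.2⟩ = φ S hS x)
    (hscompat : ∀ (S : Set P) hS (S' : Set P) hS' (hsub : S ⊆ S') (x : S),
      s S' hS' ⟨x, hsub x.2⟩ = s S hS x ≫
        eqToHom (congrArg G.obj (hφcompat S hS S' hS' hsub x).symm)) :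
    ∃! Hσ : Σ' H : P → Q, ∀ a, F a ⟶ G.obj (H a),
      ∃ hmono : ∀ a b, r a b → Hσ.1 a ≤ Hσ.1 b,
        (∀ a b (h : r a b), Fmap a b h ≫ Hσ.2 b = Hσ.2 a ≫ G.map (homOfLE (hmono a b h))) ∧
        ∀ (S : Set P) hS (x : S), ∃ h : Hσ.1 x = φ S hS x,
          Hσ.2 x = s S hS x ≫ eqToHom (congrArg G.obj h.symm) := by
  have hcompat : IsCompatible (fun a ↦ StructuredArrow (F a) G)
      fun S hS x ↦ StructuredArrow.mk (s S hS x) := fun S hS S' hS' hsub x ↦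
    structuredArrow_mk_eq_mk_iff.mpr
      ⟨hφcompat S hS S' hS' hsub x, hscompat S hS S' hS' hsub x⟩
  have hglue := hcompat.existsUnique_isPersHom Fmap fun S hS ↦
    isPersHom_mk_iff.mpr ⟨hφmono S hS, hnat S hS⟩
  refine ((structuredArrowFamilyEquiv F G).existsUnique_congr fun Hσ ↦ ?_).mpr hglue
  simp only [exists_and_right, structuredArrowFamilyEquiv, Equiv.coe_fn_mk, isPersHom_mk_iff,
    structuredArrow_mk_eq_mk_iff]

end PersistenceMorphisms

/-- Let `X` be a compact pospace, `k` a field and `n ≥ 1`.  The natural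
homology `(tpos(X), H⃗_n(X;k))`, with the morphisms `(inclusion, identity)` from each
restriction, is the colimit in `Pers(Vect_k)` of the diagram over the maximal chains of
`tpos(X)` completed with their pairwise intersections, sending each such sub-poset `S` to
`(S, H⃗_n(X;k)|_S)` and each inclusion to `(inclusion, identity)`.  The natural homology diagram
is presented by its object part `Hobj` (defined concretely above) and its map part `Hmap`,
characterized by: it is functorial, and the map attached to an extension
`⟨g⟩ = ⟨u⟩ ⋆ ⟨f⟩ ⋆ ⟨v⟩` is induced in singular homology by the continuous map
`⟨u⟩ ⋆ - ⋆ ⟨v⟩` between trace spaces.  Morphisms of `Pers(Vect_k)` are presented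
componentwise. -/
theorem natural_homology_is_colimit_of_persistence_along_maximal_traces
    (k : Type) [Field k] (n : ℕ) (hn : 1 ≤ n)
    (X : Type) [TopologicalSpace X] [PartialOrder X] [T2Space X] [OrderClosedTopology X]
    [CompactSpace X]
    -- the map part of the natural homology functor H⃗_n(X;k) on tpos(X) ...
    (Hmap : ∀ a b : TPos X, TPosLE a b → (Hobj k (n - 1) X a ⟶ Hobj k (n - 1) X b))
    -- ... which is functorial ...
    (hid : ∀ (a : TPos X) (h : TPosLE a a), Hmap a a h = 𝟙 _)
    (hcomp : ∀ (a b c : TPos X) (hab : TPosLE a b) (hbc : TPosLE b c) (hac : TPosLE a c),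
      Hmap a c hac = Hmap a b hab ≫ Hmap b c hbc)
    -- ... and whose maps are induced in homology by concatenation of the extensions:
    (hinduced : ∀ (a b : TPos X) (h : TPosLE a b),
      ∃ (g : TopCat.of (TraceSpace X a.1.src a.1.tgt) ⟶ TopCat.of (TraceSpace X b.1.src b.1.tgt))
        (u v : unitInterval → X), IsDipath u ∧ IsDipath v ∧
        (∃ f : unitInterval → X, IsDipath f ∧ u 1 = f 0 ∧ f 1 = v 0 ∧
          a.1 = trc f ∧ b.1 = trc (concatFun (concatFun u f) v)) ∧
        (∀ (p : DipathSpace X a.1.src a.1.tgt) (q : DipathSpace X b.1.src b.1.tgt),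
          ReparamEquiv (q.1 : unitInterval → X) (concatFun (concatFun u (p.1 : unitInterval → X)) v) →
          g (Quot.mk _ p) = Quot.mk _ q) ∧
        Hmap a b h = (SingularH k (n - 1)).map g) :
    -- conclusion: `(tpos(X), H⃗_n(X;k))` is a colimit cocone in `Pers(Vect_k)` over the diagram
    -- of restrictions to the maximal chains of `tpos(X)` and their pairwise intersections:
    ∀ (Q : Type) [PartialOrder Q] (G : Q ⥤ ModuleCat k)
      (φ : ∀ S : Set (TPos X), MaxChainOrInter X S → (↥S → Q)),
      -- each φ_S monotone, i.e. (φ_S, s_S) : (S, H|_S) → (Q, G) is a morphism in Pers(Vect_k)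
      ∀ (hφmono : ∀ (S : Set (TPos X)) (hS : MaxChainOrInter X S) (x y : ↥S),
          TPosLE x.1 y.1 → φ S hS x ≤ φ S hS y)
        (s : ∀ (S : Set (TPos X)) (hS : MaxChainOrInter X S) (x : ↥S),
          Hobj k (n - 1) X x.1 ⟶ G.obj (φ S hS x)),
        (∀ (S : Set (TPos X)) (hS : MaxChainOrInter X S) (x y : ↥S) (h : TPosLE x.1 y.1),
          Hmap x.1 y.1 h ≫ s S hS y = s S hS x ≫ G.map (homOfLE (hφmono S hS x y h))) →
        -- compatibility of the family with the inclusions of the diagram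
        ∀ (hφcompat : ∀ (S : Set (TPos X)) (hS : MaxChainOrInter X S)
            (S' : Set (TPos X)) (hS' : MaxChainOrInter X S') (hsub : S ⊆ S') (x : ↥S),
            φ S' hS' ⟨x.1, hsub x.2⟩ = φ S hS x),
          (∀ (S : Set (TPos X)) (hS : MaxChainOrInter X S)
            (S' : Set (TPos X)) (hS' : MaxChainOrInter X S') (hsub : S ⊆ S') (x : ↥S),
            s S' hS' ⟨x.1, hsub x.2⟩ =
              s S hS x ≫ eqToHom (congrArg G.obj (hφcompat S hS S' hS' hsub x).symm)) →
          -- unique factorization through `(tpos(X), H⃗_n(X;k))`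
          ∃! Hσ : Σ' H : TPos X → Q, ∀ a : TPos X, Hobj k (n - 1) X a ⟶ G.obj (H a),
            ∃ hmono : ∀ a b : TPos X, TPosLE a b → Hσ.1 a ≤ Hσ.1 b,
              (∀ (a b : TPos X) (h : TPosLE a b),
                Hmap a b h ≫ Hσ.2 b = Hσ.2 a ≫ G.map (homOfLE (hmono a b h))) ∧
              (∀ (S : Set (TPos X)) (hS : MaxChainOrInter X S) (x : ↥S),
                ∃ h : Hσ.1 x.1 = φ S hS x,
                  Hσ.2 x.1 = s S hS x ≫ eqToHom (congrArg G.obj h.symm)) := by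
  intro Q _ G φ hφmono s hnat hφcompat hscompat
  exact natural_homology_is_colimit_of_persistence_along_maximal_traces_general Hmap
    φ hφmono s hnat hφcompat hscompat

end
end

section
/- Let X be a compact pospace, α a point of X, k a field, and n ≥ 1. Let ↑α be the up-set of α (regarded as the constant trace at α) in tpos(X). Then (↑α, H⃗_n(X;k) restricted to ↑α), with the morphisms (inclusion, identity), is the colimit in Pers(Vect_k) of the diagram over the maximal chains of ↑α (equivalently, the maximal chains of tpos(X) passing through α) completed with their pairwise intersections, sending each such sub-poset S to (S, H⃗_n(X;k) restricted to S) and each inclusion to the morphism (inclusion, identity). -/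
open CategoryTheory

noncomputable section

/-- Maximal chains of a sub-poset `U` of the trace poset: chains contained in `U` that are
maximal among chains contained in `U`. -/
def MaxChainIn (X : Type) [TopologicalSpace X] [PartialOrder X]
    (U S : Set (TPos X)) : Prop :=
  IsChain TPosLE S ∧ S ⊆ U ∧
    ∀ S' : Set (TPos X), IsChain TPosLE S' → S' ⊆ U → S ⊆ S' → S' = S

/-- The maximal chains of `U` together with their pairwise intersections. -/
def MaxChainInOrInter (X : Type) [TopologicalSpace X] [PartialOrder X]
    (U S : Set (TPos X)) : Prop :=
  MaxChainIn X U S ∨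
    ∃ C₁ C₂ : Set (TPos X), MaxChainIn X U C₁ ∧ MaxChainIn X U C₂ ∧ S = C₁ ∩ C₂

/-!
At an element `a`, a morphism `(P, F) ⟶ (Q, G)` of `Pers(𝒞)` consists of a point `q` of `Q` and an
arrow `F a ⟶ G q`, that is, of an object of `StructuredArrow (F a) G`. A cocone over a family of
subsets of `P` therefore assigns a structured arrow to each pair `a ∈ S`, invariantly under
enlarging `S`, and this value depends on `a` alone as soon as the members of the family through `a`
form a connected poset. Two maximal chains through `a` are connected through their intersection,
and monotonicity and naturality only involve two comparable elements, which lie on a common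
maximal chain by Zorn's lemma.
-/

theorem exists_maximal_isChain_superset {P : Type*} {r : P → P → Prop} {U S : Set P}
    (hS : IsChain r S) (hSU : S ⊆ U) :
    ∃ C, S ⊆ C ∧ Maximal (fun C => IsChain r C ∧ C ⊆ U) C := by
  refine zorn_subset_nonempty {C | IsChain r C ∧ C ⊆ U} (fun c hc hchain _ => ?_) S ⟨hS, hSU⟩
  have hUnion : IsChain r (⋃₀ c) :=
    (Set.pairwise_sUnion hchain.directedOn).2 fun C hC => (hc hC).1
  exact ⟨⋃₀ c, ⟨hUnion, Set.sUnion_subset fun C hC => (hc hC).2⟩,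
    fun C hC => Set.subset_sUnion_of_mem hC⟩

section MaximalChains

variable {X : Type} [TopologicalSpace X] [PartialOrder X] {U S : Set (TPos X)} {a b : TPos X}

theorem maxChainIn_iff_maximal :
    MaxChainIn X U S ↔ Maximal (fun C => IsChain TPosLE C ∧ C ⊆ U) S :=
  ⟨fun h => ⟨⟨h.1, h.2.1⟩, fun C hC hSC => (h.2.2 C hC.1 hC.2 hSC).subset⟩,
    fun h => ⟨h.prop.1, h.prop.2, fun _ hC hCU hSC => (h.eq_of_subset ⟨hC, hCU⟩ hSC).symm⟩⟩

theorem exists_maxChainIn_superset (hS : IsChain TPosLE S) (hSU : S ⊆ U) :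
    ∃ C, S ⊆ C ∧ MaxChainIn X U C := by
  simpa only [maxChainIn_iff_maximal] using exists_maximal_isChain_superset hS hSU

theorem MaxChainInOrInter.exists_maxChainIn_superset (hS : MaxChainInOrInter X U S) :
    ∃ C, S ⊆ C ∧ MaxChainIn X U C := by
  rcases hS with hS | ⟨C₁, C₂, hC₁, -, rfl⟩
  · exact ⟨S, subset_rfl, hS⟩
  · exact ⟨C₁, Set.inter_subset_left, hC₁⟩

theorem exists_maxChainInOrInter_mem_mem (ha : a ∈ U) (hb : b ∈ U) (hab : TPosLE a b) :
    ∃ S, MaxChainInOrInter X U S ∧ a ∈ S ∧ b ∈ S := by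
  obtain ⟨C, hC, hCmax⟩ := exists_maxChainIn_superset (IsChain.pair hab) (Set.pair_subset ha hb)
  exact ⟨C, Or.inl hCmax, Set.pair_subset_iff.1 hC⟩

theorem isConnected_maxChainInOrInter_through (ha : a ∈ U) :
    CategoryTheory.IsConnected {S : Set (TPos X) // MaxChainInOrInter X U S ∧ a ∈ S} := by
  have : Nonempty {S : Set (TPos X) // MaxChainInOrInter X U S ∧ a ∈ S} := by
    obtain ⟨C, haC, hC⟩ := exists_maxChainIn_superset IsChain.singleton
      (Set.singleton_subset_iff.2 ha)
    exact ⟨C, Or.inl hC, Set.singleton_subset_iff.1 haC⟩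
  refine zigzag_isConnected fun ⟨S, hS, haS⟩ ⟨S', hS', haS'⟩ => ?_
  obtain ⟨C, hSC, hC⟩ := hS.exists_maxChainIn_superset
  obtain ⟨C', hSC', hC'⟩ := hS'.exists_maxChainIn_superset
  let through (T : Set (TPos X)) (hT : MaxChainInOrInter X U T) (haT : a ∈ T) :
      {S : Set (TPos X) // MaxChainInOrInter X U S ∧ a ∈ S} := ⟨T, hT, haT⟩
  calc Zigzag (through S hS haS) (through C (Or.inl hC) (hSC haS)) := .of_hom (homOfLE hSC)
    Zigzag _ (through (C ∩ C') (Or.inr ⟨C, C', hC, hC', rfl⟩) ⟨hSC haS, hSC' haS'⟩) :=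
      .of_inv (homOfLE Set.inter_subset_left)
    Zigzag _ (through C' (Or.inl hC') (hSC' haS')) := .of_hom (homOfLE Set.inter_subset_right)
    Zigzag _ (through S' hS' haS') := .of_inv (homOfLE hSC')

end MaximalChains

theorem existsUnique_glue_of_isConnected_through {P : Type*} {U : Set P} {𝒟 : Set P → Prop}
    (h𝒟 : ∀ x ∈ U, CategoryTheory.IsConnected {S : Set P // 𝒟 S ∧ x ∈ S})
    {V : P → Type*} (v : ∀ S : Set P, 𝒟 S → ∀ x : S, V x)
    (hv : ∀ (S : Set P) (hS : 𝒟 S) (S' : Set P) (hS' : 𝒟 S') (hsub : S ⊆ S') (x : S),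
      v S' hS' ⟨x.1, hsub x.2⟩ = v S hS x) :
    ∃! w : ∀ a : U, V a,
      ∀ (S : Set P) (hS : 𝒟 S) (x : S) (hxU : x.1 ∈ U), w ⟨x.1, hxU⟩ = v S hS x := by
  have hconst (x : P) (hx : x ∈ U) (A B : {S : Set P // 𝒟 S ∧ x ∈ S}) :
      v A.1 A.2.1 ⟨x, A.2.2⟩ = v B.1 B.2.1 ⟨x, B.2.2⟩ := by
    have := h𝒟 x hx
    exact constant_of_preserves_morphisms (α := V x)
      (fun A : {S : Set P // 𝒟 S ∧ x ∈ S} => v A.1 A.2.1 ⟨x, A.2.2⟩)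
      (fun A B f => (hv A.1 A.2.1 B.1 B.2.1 (leOfHom f) ⟨x, A.2.2⟩).symm) A B
  let A (a : U) : {S : Set P // 𝒟 S ∧ a.1 ∈ S} := (h𝒟 a.1 a.2).is_nonempty.some
  refine ⟨fun a => v (A a).1 (A a).2.1 ⟨a.1, (A a).2.2⟩, ?_, ?_⟩
  · exact fun S hS x hxU => hconst x.1 hxU (A ⟨x.1, hxU⟩) ⟨S, hS, x.2⟩
  · exact fun w hw => funext fun a => hw (A a).1 (A a).2.1 ⟨a.1, (A a).2.2⟩ a.2

theorem structuredArrow_eq_mk_iff {𝒞 : Type*} [Category* 𝒞] {𝒬 : Type*} [Category* 𝒬]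
    {G : 𝒬 ⥤ 𝒞} {A : 𝒞} (f : StructuredArrow A G) {q : 𝒬} (g : A ⟶ G.obj q) :
    f = StructuredArrow.mk g ↔
      ∃ h : f.right = q, f.hom = g ≫ eqToHom (congrArg G.obj h.symm) := by
  constructor
  · rintro rfl
    exact ⟨rfl, by simp⟩
  · rintro ⟨rfl, h⟩
    rw [eqToHom_refl, Category.comp_id] at h
    rw [← h, ← f.eq_mk]

theorem natural_homology_of_upset_is_colimit_of_persistence_along_maximal_chains_through_general
    {P : Type*} {r : P → P → Prop} {U : Set P} {𝒟 : Set P → Prop}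
    (hconn : ∀ x ∈ U, CategoryTheory.IsConnected {S : Set P // 𝒟 S ∧ x ∈ S})
    (hpair : ∀ a ∈ U, ∀ b ∈ U, r a b → ∃ S, 𝒟 S ∧ a ∈ S ∧ b ∈ S)
    {𝒞 : Type*} [Category* 𝒞] {F : P → 𝒞} (Fmap : ∀ a b, r a b → (F a ⟶ F b))
    {Q : Type*} [Preorder Q] (G : Q ⥤ 𝒞)
    (φ : ∀ S : Set P, 𝒟 S → S → Q)
    (hφmono : ∀ (S : Set P) (hS : 𝒟 S) (x y : S), r x y → φ S hS x ≤ φ S hS y)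
    (s : ∀ (S : Set P) (hS : 𝒟 S) (x : S), F x ⟶ G.obj (φ S hS x))
    (hs : ∀ (S : Set P) (hS : 𝒟 S) (x y : S) (h : r x y),
      Fmap x y h ≫ s S hS y = s S hS x ≫ G.map (homOfLE (hφmono S hS x y h)))
    (hφcompat : ∀ (S : Set P) (hS : 𝒟 S) (S' : Set P) (hS' : 𝒟 S') (hsub : S ⊆ S') (x : S),
      φ S' hS' ⟨x.1, hsub x.2⟩ = φ S hS x)
    (hscompat : ∀ (S : Set P) (hS : 𝒟 S) (S' : Set P) (hS' : 𝒟 S') (hsub : S ⊆ S') (x : S),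
      s S' hS' ⟨x.1, hsub x.2⟩ =
        s S hS x ≫ eqToHom (congrArg G.obj (hφcompat S hS S' hS' hsub x).symm)) :
    ∃! Hσ : Σ' H : U → Q, ∀ a : U, F a ⟶ G.obj (H a),
      ∃ hmono : ∀ a b : U, r a b → Hσ.1 a ≤ Hσ.1 b,
        (∀ (a b : U) (h : r a b),
          Fmap a b h ≫ Hσ.2 b = Hσ.2 a ≫ G.map (homOfLE (hmono a b h))) ∧
        (∀ (S : Set P) (hS : 𝒟 S) (x : S) (hxU : x.1 ∈ U),
          ∃ h : Hσ.1 ⟨x.1, hxU⟩ = φ S hS x,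
            Hσ.2 ⟨x.1, hxU⟩ = s S hS x ≫ eqToHom (congrArg G.obj h.symm)) := by
  obtain ⟨w, hw, hw_unique⟩ := existsUnique_glue_of_isConnected_through hconn
    (V := fun x => StructuredArrow (F x) G) (fun S hS x => StructuredArrow.mk (s S hS x))
    (fun S hS S' hS' hsub x => (structuredArrow_eq_mk_iff _ _).2
      ⟨hφcompat S hS S' hS' hsub x, hscompat S hS S' hS' hsub x⟩)
  have hnat (a b : U) (h : r a b) : ∃ hle : (w a).right ≤ (w b).right,
      Fmap a b h ≫ (w b).hom = (w a).hom ≫ G.map (homOfLE hle) := by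
    obtain ⟨S, hS, haS, hbS⟩ := hpair a a.2 b b.2 h
    rw [hw S hS ⟨a, haS⟩ a.2, hw S hS ⟨b, hbS⟩ b.2]
    exact ⟨hφmono S hS ⟨a, haS⟩ ⟨b, hbS⟩ h, hs S hS ⟨a, haS⟩ ⟨b, hbS⟩ h⟩
  refine ⟨⟨fun a => (w a).right, fun a => (w a).hom⟩, ⟨fun a b h => (hnat a b h).1,
    fun a b h => (hnat a b h).2,
    fun S hS x hxU => (structuredArrow_eq_mk_iff _ _).1 (hw S hS x hxU)⟩, ?_⟩
  rintro ⟨H, σ⟩ ⟨-, -, hσ⟩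
  have hσw : (fun a => StructuredArrow.mk (σ a)) = w := hw_unique _ fun S hS x hxU =>
    (structuredArrow_eq_mk_iff _ _).2 (hσ S hS x hxU)
  subst hσw
  rfl

/-- Let `X` be a compact pospace, `α ∈ X`, `k` a field and `n ≥ 1`, and let
`↑α` be the up-set of `α` (regarded as the constant trace at `α`) in `tpos(X)`.  Then
`(↑α, H⃗_n(X;k)|_{↑α})`, with the morphisms `(inclusion, identity)`, is the colimit in
`Pers(Vect_k)` of the diagram over the maximal chains of `↑α` (the maximal chains of `tpos(X)`
through `α`) completed with their pairwise intersections, sending each such sub-poset `S` to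
`(S, H⃗_n(X;k)|_S)` and each inclusion to `(inclusion, identity)`.  The natural homology diagram
is presented by its object part `Hobj` (defined concretely above) and its map part `Hmap`,
characterized by: it is functorial, and the map attached to an extension
`⟨g⟩ = ⟨u⟩ ⋆ ⟨f⟩ ⋆ ⟨v⟩` is induced in singular homology by the continuous map
`⟨u⟩ ⋆ - ⋆ ⟨v⟩` between trace spaces.  Morphisms of `Pers(Vect_k)` are presented
componentwise. -/
theorem natural_homology_of_upset_is_colimit_of_persistence_along_maximal_chains_through
    (k : Type) [Field k] (n : ℕ) (hn : 1 ≤ n)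
    (X : Type) [TopologicalSpace X] [PartialOrder X] [T2Space X] [OrderClosedTopology X]
    [CompactSpace X] (α : X)
    -- the map part of the natural homology functor H⃗_n(X;k) on tpos(X) ...
    (Hmap : ∀ a b : TPos X, TPosLE a b → (Hobj k (n - 1) X a ⟶ Hobj k (n - 1) X b))
    -- ... which is functorial ...
    (hid : ∀ (a : TPos X) (h : TPosLE a a), Hmap a a h = 𝟙 _)
    (hcomp : ∀ (a b c : TPos X) (hab : TPosLE a b) (hbc : TPosLE b c) (hac : TPosLE a c),
      Hmap a c hac = Hmap a b hab ≫ Hmap b c hbc)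
    -- ... and whose maps are induced in homology by concatenation of the extensions:
    (hinduced : ∀ (a b : TPos X) (h : TPosLE a b),
      ∃ (g : TopCat.of (TraceSpace X a.1.src a.1.tgt) ⟶ TopCat.of (TraceSpace X b.1.src b.1.tgt))
        (u v : unitInterval → X), IsDipath u ∧ IsDipath v ∧
        (∃ f : unitInterval → X, IsDipath f ∧ u 1 = f 0 ∧ f 1 = v 0 ∧
          a.1 = trc f ∧ b.1 = trc (concatFun (concatFun u f) v)) ∧
        (∀ (p : DipathSpace X a.1.src a.1.tgt) (q : DipathSpace X b.1.src b.1.tgt),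
          ReparamEquiv (q.1 : unitInterval → X) (concatFun (concatFun u (p.1 : unitInterval → X)) v) →
          g (Quot.mk _ p) = Quot.mk _ q) ∧
        Hmap a b h = (SingularH k (n - 1)).map g) :
    -- the up-set of α (as a constant trace) in tpos(X)
    ∀ U : Set (TPos X), U = {a : TPos X | TraceLE (trc fun _ => α) a.1} →
    -- conclusion: `(↑α, H⃗_n(X;k)|_{↑α})` is a colimit cocone in `Pers(Vect_k)` over the diagram
    -- of restrictions to the maximal chains of `↑α` and their pairwise intersections:
    ∀ (Q : Type) [PartialOrder Q] (G : Q ⥤ ModuleCat k)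
      (φ : ∀ S : Set (TPos X), MaxChainInOrInter X U S → (↥S → Q)),
      -- each φ_S monotone, i.e. (φ_S, s_S) : (S, H|_S) → (Q, G) is a morphism in Pers(Vect_k)
      ∀ (hφmono : ∀ (S : Set (TPos X)) (hS : MaxChainInOrInter X U S) (x y : ↥S),
          TPosLE x.1 y.1 → φ S hS x ≤ φ S hS y)
        (s : ∀ (S : Set (TPos X)) (hS : MaxChainInOrInter X U S) (x : ↥S),
          Hobj k (n - 1) X x.1 ⟶ G.obj (φ S hS x)),
        (∀ (S : Set (TPos X)) (hS : MaxChainInOrInter X U S) (x y : ↥S) (h : TPosLE x.1 y.1),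
          Hmap x.1 y.1 h ≫ s S hS y = s S hS x ≫ G.map (homOfLE (hφmono S hS x y h))) →
        -- compatibility of the family with the inclusions of the diagram
        ∀ (hφcompat : ∀ (S : Set (TPos X)) (hS : MaxChainInOrInter X U S)
            (S' : Set (TPos X)) (hS' : MaxChainInOrInter X U S') (hsub : S ⊆ S') (x : ↥S),
            φ S' hS' ⟨x.1, hsub x.2⟩ = φ S hS x),
          (∀ (S : Set (TPos X)) (hS : MaxChainInOrInter X U S)
            (S' : Set (TPos X)) (hS' : MaxChainInOrInter X U S') (hsub : S ⊆ S') (x : ↥S),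
            s S' hS' ⟨x.1, hsub x.2⟩ =
              s S hS x ≫ eqToHom (congrArg G.obj (hφcompat S hS S' hS' hsub x).symm)) →
          -- unique factorization through `(↑α, H⃗_n(X;k)|_{↑α})`
          ∃! Hσ : Σ' H : ↥U → Q, ∀ a : ↥U, Hobj k (n - 1) X a.1 ⟶ G.obj (H a),
            ∃ hmono : ∀ a b : ↥U, TPosLE a.1 b.1 → Hσ.1 a ≤ Hσ.1 b,
              (∀ (a b : ↥U) (h : TPosLE a.1 b.1),
                Hmap a.1 b.1 h ≫ Hσ.2 b = Hσ.2 a ≫ G.map (homOfLE (hmono a b h))) ∧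
              (∀ (S : Set (TPos X)) (hS : MaxChainInOrInter X U S) (x : ↥S) (hxU : x.1 ∈ U),
                ∃ h : Hσ.1 ⟨x.1, hxU⟩ = φ S hS x,
                  Hσ.2 ⟨x.1, hxU⟩ = s S hS x ≫ eqToHom (congrArg G.obj h.symm)) := by
  rintro U - Q _ G φ hφmono s hs hφcompat hscompat
  exact
    natural_homology_of_upset_is_colimit_of_persistence_along_maximal_chains_through_general
      (fun _ hx => isConnected_maxChainInOrInter_through hx)
      (fun _ ha _ hb hab => exists_maxChainInOrInter_mem_mem ha hb hab)
      Hmap G φ hφmono s hs hφcompat hscompat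

end
end
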